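/- arXiv:2206.11735 — 2 statements merged into one kernel-verified Lean document; each statement's English description precedes it below -/
import Mathlib

section
/- Assume (A(t), B(t)) is totally controllable on [0,1] and let Σ₀ be symmetric positive definite. On the domain 𝒟 = {Π₀ ∈ ℝ^{n×n} : Π₀ = Π₀ᵀ, Π₀ ≺ −Φ₁₂(1,0)⁻¹Φ₁₁(1,0)}, define f(Π₀) = Φ_{Π₀}(1,0)[Σ₀ + ∫₀¹ Φ_{Π₀}(s,0)⁻¹ C(s)D(s)C(s)ᵀ Φ_{Π₀}(s,0)⁻ᵀ ds]Φ_{Π₀}(1,0)ᵀ, where Φ_{Π₀}(t,0) := Φ₁₁(t,0) + Φ₁₂(t,0)Π₀ (which is invertible for all t ∈ [0,1] when Π₀ ∈ 𝒟). Then f is a homeomorphism from 𝒟 onto the set {Σ₁ ∈ ℝ^{n×n} : Σ₁ = Σ₁ᵀ ≻ 0} of symmetric positive definite matrices; in particular, for every symmetric Σ₁ ≻ 0 there exists a unique Π₀ ∈ 𝒟 with f(Π₀) = Σ₁. -/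
open Matrix

/-- `IsSTM F Φ`: `Φ` is the state transition matrix of `F`, i.e. for each fixed `s`,
`t ↦ Φ t s` solves `X' = F t * X`, `X s = 1` (derivatives taken entrywise). -/
def IsSTM {ι : Type*} [Fintype ι] [DecidableEq ι] (F : ℝ → Matrix ι ι ℝ)
    (Φ : ℝ → ℝ → Matrix ι ι ℝ) : Prop :=
  (∀ s : ℝ, Φ s s = 1) ∧
  ∀ (s t : ℝ) (i j : ι), HasDerivAt (fun t' : ℝ => Φ t' s i j) ((F t * Φ t s) i j) t

/-- `IsCtrbMatSeq A B Γ`: `Γ 0 = B` and `Γ k = -A Γ (k-1) + Γ' (k-1)` for `1 ≤ k ≤ n`,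
i.e. the derivative of each entry of `Γ k` is the corresponding entry of `Γ (k+1) + A * Γ k`,
for `k < n`. -/
def IsCtrbMatSeq {n p : ℕ} (A : ℝ → Matrix (Fin n) (Fin n) ℝ)
    (B : ℝ → Matrix (Fin n) (Fin p) ℝ) (Γ : ℕ → ℝ → Matrix (Fin n) (Fin p) ℝ) : Prop :=
  Γ 0 = B ∧
  ∀ k < n, ∀ (t : ℝ) (i : Fin n) (j : Fin p),
    HasDerivAt (fun τ : ℝ => Γ k τ i j) ((Γ (k + 1) t + A t * Γ k t) i j) t

/-- The controllability matrix `Θₙ(t) = [Γ₀(t) Γ₁(t) ⋯ Γ_{n−1}(t)]`. -/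
def ctrbMat {n p : ℕ} (Γ : ℕ → ℝ → Matrix (Fin n) (Fin p) ℝ) (t : ℝ) :
    Matrix (Fin n) (Fin n × Fin p) ℝ :=
  Matrix.of fun i kj => Γ (kj.1 : ℕ) t i kj.2

/-- Total controllability of `(A(t), B(t))` on `[0,1]`. -/
def TotallyControllable {n p : ℕ} (Γ : ℕ → ℝ → Matrix (Fin n) (Fin p) ℝ) : Prop :=
  ∀ t₀ t₁ : ℝ, 0 ≤ t₀ → t₀ < t₁ → t₁ ≤ 1 →
    ∃ t ∈ Set.Ioo t₀ t₁, (ctrbMat Γ t).rank = n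


/-- The map `f` from `Π₀` to the terminal covariance `Σ₁ = f(Π₀)`. -/
noncomputable def steerMap {n q : ℕ}
    (Φ : ℝ → ℝ → Matrix (Fin n ⊕ Fin n) (Fin n ⊕ Fin n) ℝ)
    (C : ℝ → Matrix (Fin n) (Fin q) ℝ) (D : ℝ → Matrix (Fin q) (Fin q) ℝ)
    (Sig0 : Matrix (Fin n) (Fin n) ℝ) (P : Matrix (Fin n) (Fin n) ℝ) :
    Matrix (Fin n) (Fin n) ℝ :=
  ((Φ 1 0).toBlocks₁₁ + (Φ 1 0).toBlocks₁₂ * P) *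
    (Sig0 + Matrix.of fun i j => ∫ s in (0:ℝ)..1,
      ((((Φ s 0).toBlocks₁₁ + (Φ s 0).toBlocks₁₂ * P)⁻¹ * (C s * D s * (C s)ᵀ) *
        ((((Φ s 0).toBlocks₁₁ + (Φ s 0).toBlocks₁₂ * P)⁻¹)ᵀ)) i j)) *
  ((Φ 1 0).toBlocks₁₁ + (Φ 1 0).toBlocks₁₂ * P)ᵀ

/-!
In a linear Hamiltonian system the transition matrix is symplectic, and some symmetric initial
slope `P₀` gives state blocks `X = Φ_{P₀}(·, 0)` which are invertible on `[0, 1]`. The matrices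
`L = -X⁻¹ Φ₁₂` then form a controllability Gramian, which total controllability makes strictly
increasing, and `Φ_P = X (1 - L (P - P₀))` for every slope `P`. With `E = L 1`, the admissible
slopes `P ≺ K = -Φ₁₂(1, 0)⁻¹ Φ₁₁(1, 0)` are parametrised by the positive definite matrices
`Y = (E (K - P) E)⁻¹`, and the terminal covariance becomes
`X(1) (J₀⁻¹ Σ₀ J₀⁻ᵀ + ∫ Jₛ⁻¹ Wₛ Jₛ⁻ᵀ ds) X(1)ᵀ` with `Jₛ = 1 + (E - L s) (Y - E⁻¹)`.
The bracket is the gradient of a strictly concave function of `Y` which tends to `-∞` at the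
boundary of the cone and grows sublinearly at infinity. Subtracting a linear function `tr (S Y)`
leaves a function with a unique maximiser, where the gradient is `S`; compactness of its superlevel
sets makes the maximiser depend continuously on `S`.
-/

section PositiveMatrices

variable {ι : Type*}

theorem transpose_eq_of_posSemidef {A : Matrix ι ι ℝ} (hA : A.PosSemidef) : Aᵀ = A := by
  rw [← conjTranspose_eq_transpose_of_trivial, hA.isHermitian.eq]

theorem posSemidef_vecMulVec_self [Finite ι] (x : ι → ℝ) : (vecMulVec x x).PosSemidef := by
  simpa only [star_trivial] using posSemidef_vecMulVec_self_star x

variable [Fintype ι]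

theorem posSemidef_of_dotProduct_mulVec {A : Matrix ι ι ℝ} (hs : Aᵀ = A)
    (h : ∀ x, 0 ≤ x ⬝ᵥ A *ᵥ x) : A.PosSemidef :=
  .of_dotProduct_mulVec_nonneg (by rwa [IsHermitian, conjTranspose_eq_transpose_of_trivial])
    fun x => by simpa only [star_trivial] using h x

theorem posDef_of_dotProduct_mulVec {A : Matrix ι ι ℝ} (hs : Aᵀ = A)
    (h : ∀ x ≠ 0, 0 < x ⬝ᵥ A *ᵥ x) : A.PosDef :=
  .of_dotProduct_mulVec_pos (by rwa [IsHermitian, conjTranspose_eq_transpose_of_trivial])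
    fun x hx => by simpa only [star_trivial] using h x hx

theorem dotProduct_mulVec_nonneg_of_posSemidef {A : Matrix ι ι ℝ} (hA : A.PosSemidef)
    (x : ι → ℝ) : 0 ≤ x ⬝ᵥ A *ᵥ x := by
  simpa only [star_trivial] using hA.dotProduct_mulVec_nonneg x

theorem posSemidef_mul_mul_transpose {κ : Type*} [Finite κ] {A : Matrix ι ι ℝ}
    (hA : A.PosSemidef) (B : Matrix κ ι ℝ) : (B * A * Bᵀ).PosSemidef := by
  simpa only [conjTranspose_eq_transpose_of_trivial] using hA.mul_mul_conjTranspose_same B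

theorem posSemidef_transpose_mul_mul {κ : Type*} [Finite κ] {A : Matrix ι ι ℝ}
    (hA : A.PosSemidef) (B : Matrix ι κ ℝ) : (Bᵀ * A * B).PosSemidef := by
  simpa only [transpose_transpose] using posSemidef_mul_mul_transpose hA Bᵀ

theorem exists_eq_transpose_mul_self {A : Matrix ι ι ℝ} (hA : A.PosSemidef) :
    ∃ C : Matrix ι ι ℝ, A = Cᵀ * C := by
  classical
  open scoped MatrixOrder in
  simpa only [star_eq_conjTranspose, conjTranspose_eq_transpose_of_trivial] using
    CStarAlgebra.nonneg_iff_eq_star_mul_self.mp hA.nonneg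

theorem trace_transpose_mul_self_mul (C D : Matrix ι ι ℝ) :
    (Cᵀ * C * (Dᵀ * D)).trace = ∑ i, ∑ j, (C * Dᵀ) i j ^ 2 := by
  rw [show Cᵀ * C * (Dᵀ * D) = Cᵀ * (C * Dᵀ * D) by simp only [Matrix.mul_assoc],
    trace_mul_comm, Matrix.mul_assoc, ← transpose_transpose D, ← transpose_mul,
    transpose_transpose]
  simp only [trace, diag_apply, Matrix.mul_apply (M := C * Dᵀ), transpose_apply, sq]

theorem trace_mul_nonneg {A B : Matrix ι ι ℝ} (hA : A.PosSemidef) (hB : B.PosSemidef) :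
    0 ≤ (A * B).trace := by
  obtain ⟨C, rfl⟩ := exists_eq_transpose_mul_self hA
  obtain ⟨D, rfl⟩ := exists_eq_transpose_mul_self hB
  rw [trace_transpose_mul_self_mul]
  positivity

theorem trace_mul_le_trace_mul_trace {A B : Matrix ι ι ℝ} (hA : A.PosSemidef)
    (hB : B.PosSemidef) : (A * B).trace ≤ A.trace * B.trace := by
  obtain ⟨C, rfl⟩ := exists_eq_transpose_mul_self hA
  obtain ⟨D, rfl⟩ := exists_eq_transpose_mul_self hB
  have trace_eq (X : Matrix ι ι ℝ) : (Xᵀ * X).trace = ∑ i, ∑ j, X i j ^ 2 := by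
    rw [Finset.sum_comm]
    simp only [trace, diag_apply, Matrix.mul_apply, transpose_apply, sq]
  rw [trace_transpose_mul_self_mul, trace_eq, trace_eq, Finset.sum_mul_sum]
  exact Finset.sum_le_sum fun i _ => Finset.sum_le_sum fun j _ =>
    Finset.sum_mul_sq_le_sq_mul_sq Finset.univ (C i) (D j)

theorem posDef_mul_mul_transpose [DecidableEq ι] {A B : Matrix ι ι ℝ} (hA : A.PosDef)
    (hB : IsUnit B) : (B * A * Bᵀ).PosDef := by
  simpa only [conjTranspose_eq_transpose_of_trivial] using
    hA.mul_mul_conjTranspose_same (vecMul_injective_of_isUnit hB)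

theorem mul_inv_of_isUnit {R : Type*} [CommRing R] [DecidableEq ι] {A : Matrix ι ι R}
    (hA : IsUnit A) : A * A⁻¹ = 1 :=
  mul_nonsing_inv _ ((isUnit_iff_isUnit_det _).1 hA)

theorem inv_mul_of_isUnit {R : Type*} [CommRing R] [DecidableEq ι] {A : Matrix ι ι R}
    (hA : IsUnit A) : A⁻¹ * A = 1 :=
  nonsing_inv_mul _ ((isUnit_iff_isUnit_det _).1 hA)

theorem trace_le_trace_inv_mul_trace_mul [DecidableEq ι] {Y X : Matrix ι ι ℝ} (hY : Y.PosDef)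
    (hX : X.PosSemidef) : X.trace ≤ Y⁻¹.trace * (Y * X).trace := by
  obtain ⟨R, hR⟩ := exists_eq_transpose_mul_self hY.posSemidef
  have hR_unit : IsUnit R := by
    have := hY.isUnit
    rw [hR, isUnit_iff_isUnit_det, det_mul] at this
    exact (isUnit_iff_isUnit_det _).2 (isUnit_of_mul_isUnit_right this)
  have hR_inv := inv_mul_of_isUnit hR_unit
  calc X.trace = (R⁻¹ * R * X * (R⁻¹ * R)ᵀ).trace := by simp [hR_inv]
    _ = (R⁻¹ᵀ * R⁻¹ * (R * X * Rᵀ)).trace := by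
        rw [transpose_mul, ← Matrix.mul_assoc, trace_mul_comm]; simp only [Matrix.mul_assoc]
    _ ≤ (R⁻¹ᵀ * R⁻¹).trace * (R * X * Rᵀ).trace :=
        trace_mul_le_trace_mul_trace
          (by simpa using posSemidef_transpose_mul_mul PosSemidef.one R⁻¹)
          (posSemidef_mul_mul_transpose hX R)
    _ = Y⁻¹.trace * (Y * X).trace := by
        rw [trace_mul_comm, transpose_nonsing_inv, ← Matrix.mul_inv_rev, ← hR, trace_mul_comm,
          ← Matrix.mul_assoc, ← hR]

theorem exists_pos_mul_trace_le_trace_mul {Y : Matrix ι ι ℝ} (hY : Y.PosDef) :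
    ∃ c : ℝ, 0 < c ∧ ∀ X : Matrix ι ι ℝ, X.PosSemidef → c * X.trace ≤ (Y * X).trace := by
  classical
  have h0 := hY.inv.posSemidef.trace_nonneg
  refine ⟨(Y⁻¹.trace + 1)⁻¹, by positivity, fun X hX => ?_⟩
  rw [inv_mul_le_iff₀ (by positivity)]
  linarith [trace_le_trace_inv_mul_trace_mul hY hX, trace_mul_nonneg hY.posSemidef hX]

theorem trace_mul_pos {Y X : Matrix ι ι ℝ} (hY : Y.PosDef) (hX : X.PosSemidef) (h : X ≠ 0) :
    0 < (Y * X).trace := by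
  obtain ⟨c, hc, hle⟩ := exists_pos_mul_trace_le_trace_mul hY
  have : 0 < X.trace := hX.trace_nonneg.lt_of_ne fun h' => h (hX.trace_eq_zero_iff.1 h'.symm)
  exact (mul_pos hc this).trans_le (hle X hX)

theorem transpose_mul_mul_ne_zero {N H : Matrix ι ι ℝ} (hN : N.PosDef) (hH : H ≠ 0) :
    Hᵀ * N * H ≠ 0 := by
  classical
  intro h
  have hHH : (H * Hᵀ).PosSemidef := by
    simpa using posSemidef_mul_mul_transpose PosSemidef.one H
  have hpos := trace_mul_pos hN hHH (by simpa using self_mul_conjTranspose_eq_zero.not.2 hH)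
  rw [← Matrix.mul_assoc, trace_mul_comm, ← Matrix.mul_assoc, h, trace_zero] at hpos
  exact hpos.false

theorem trace_mul_vecMulVec_self (A : Matrix ι ι ℝ) (x : ι → ℝ) :
    (A * vecMulVec x x).trace = x ⬝ᵥ A *ᵥ x := by
  rw [mul_vecMulVec, trace_vecMulVec, dotProduct_comm]

theorem abs_apply_le_trace {Y : Matrix ι ι ℝ} (hY : Y.PosSemidef) (i j : ι) :
    |Y i j| ≤ Y.trace := by
  refine abs_le_of_sq_le_sq ?_ hY.trace_nonneg
  have htr : (Y * Y).trace = ∑ i, ∑ j, Y i j ^ 2 := by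
    nth_rw 1 [← transpose_eq_of_posSemidef hY]
    rw [Finset.sum_comm]
    simp only [trace, diag_apply, Matrix.mul_apply, transpose_apply, sq]
  calc Y i j ^ 2 ≤ ∑ j, Y i j ^ 2 :=
        Finset.single_le_sum (f := fun j => Y i j ^ 2) (fun _ _ => sq_nonneg _) (Finset.mem_univ j)
    _ ≤ ∑ i, ∑ j, Y i j ^ 2 :=
        Finset.single_le_sum (f := fun i => ∑ j, Y i j ^ 2)
          (fun _ _ => Finset.sum_nonneg fun _ _ => sq_nonneg _) (Finset.mem_univ i)
    _ ≤ Y.trace ^ 2 := by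
        rw [← htr, sq]; exact trace_mul_le_trace_mul_trace hY hY

theorem isClosed_setOf_posSemidef {κ : Type*} [Finite κ] :
    IsClosed {A : Matrix κ κ ℝ | A.PosSemidef} := by
  cases nonempty_fintype κ
  have : {A : Matrix κ κ ℝ | A.PosSemidef} =
      {A | Aᵀ = A} ∩ ⋂ x : κ → ℝ, {A | 0 ≤ x ⬝ᵥ A *ᵥ x} := by
    ext A
    simp only [Set.mem_ofPred_eq, Set.mem_inter_iff, Set.mem_iInter]
    exact ⟨fun h => ⟨transpose_eq_of_posSemidef h, dotProduct_mulVec_nonneg_of_posSemidef h⟩,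
      fun h => posSemidef_of_dotProduct_mulVec h.1 h.2⟩
  rw [this]
  exact (isClosed_eq (by fun_prop) (by fun_prop)).inter
    (isClosed_iInter fun x => isClosed_le (by fun_prop) (by fun_prop))

variable [DecidableEq ι]

theorem continuousOn_inv_of_isUnit {X : Type*} [TopologicalSpace X] {f : X → Matrix ι ι ℝ}
    {s : Set X} (hf : ContinuousOn f s) (hu : ∀ x ∈ s, IsUnit (f x)) :
    ContinuousOn (fun x => (f x)⁻¹) s := by
  intro x hx
  refine ContinuousAt.comp_continuousWithinAt (g := Inv.inv)
    (continuousAt_matrix_inv _ ?_) (hf x hx)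
  rw [Ring.inverse_eq_inv']
  exact continuousAt_inv₀ ((isUnit_iff_isUnit_det _).1 (hu x hx)).ne_zero

theorem continuous_inv_of_isUnit {X : Type*} [TopologicalSpace X] {f : X → Matrix ι ι ℝ}
    (hf : Continuous f) (hu : ∀ x, IsUnit (f x)) : Continuous fun x => (f x)⁻¹ := by
  rw [← continuousOn_univ] at hf ⊢
  exact continuousOn_inv_of_isUnit hf fun x _ => hu x

/-- The cone of positive definite matrices, with the topology of `Matrix ι ι ℝ`. -/
abbrev PosDefCone (ι : Type*) [Fintype ι] : Type _ := {Y : Matrix ι ι ℝ // Y.PosDef}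

-- Bounding `tr Y⁻¹` keeps `Y` away from the boundary of the cone.
theorem isCompact_setOf_trace_add_trace_inv_le (r : ℝ) :
    IsCompact {Y : PosDefCone ι | Y.1.trace + Y.1⁻¹.trace ≤ r} := by
  have hbox : IsCompact {Y : Matrix ι ι ℝ | ∀ i j, |Y i j| ≤ r} := by
    have : {Y : Matrix ι ι ℝ | ∀ i j, |Y i j| ≤ r} =
        Set.univ.pi fun _ => Set.univ.pi fun _ => Set.Icc (-r) r := by
      ext Y
      simp only [Set.mem_ofPred_eq, abs_le]
      exact ⟨fun h i _ j _ => h i j, fun h i j => h i trivial j trivial⟩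
    rw [this]
    exact isCompact_univ_pi fun _ => isCompact_univ_pi fun _ => isCompact_Icc
  have hpairs : IsCompact {p : Matrix ι ι ℝ × Matrix ι ι ℝ | p.1.PosSemidef ∧ p.2.PosSemidef ∧
      p.1 * p.2 = 1 ∧ p.1.trace + p.2.trace ≤ r} := by
    refine (hbox.prod hbox).of_isClosed_subset ?_ ?_
    · exact (isClosed_setOf_posSemidef.preimage continuous_fst).inter <|
        (isClosed_setOf_posSemidef.preimage continuous_snd).inter <|
          (isClosed_eq (continuous_fst.matrix_mul continuous_snd) continuous_const).inter <|
            isClosed_le (continuous_fst.matrix_trace.add continuous_snd.matrix_trace)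
              continuous_const
    · rintro ⟨Y, Z⟩ ⟨hY, hZ, -, hle⟩
      have := hY.trace_nonneg
      have := hZ.trace_nonneg
      exact ⟨fun i j => (abs_apply_le_trace hY i j).trans (by linarith),
        fun i j => (abs_apply_le_trace hZ i j).trans (by linarith)⟩
  rw [Topology.IsEmbedding.subtypeVal.isCompact_iff]
  convert hpairs.image continuous_fst using 1
  ext Y
  constructor
  · rintro ⟨⟨Y, hY⟩, hle, rfl⟩
    exact ⟨(Y, Y⁻¹), ⟨hY.posSemidef, hY.inv.posSemidef, mul_inv_of_isUnit hY.isUnit, hle⟩, rfl⟩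
  · rintro ⟨⟨Y, Z⟩, ⟨hY, -, hYZ, hle⟩, rfl⟩
    have hYpd : Y.PosDef := hY.posDef_iff_isUnit.2 (IsUnit.of_mul_eq_one Z hYZ)
    refine ⟨⟨Y, hYpd⟩, ?_, rfl⟩
    rwa [Set.mem_ofPred_eq, inv_eq_right_inv hYZ]

end PositiveMatrices

section GradientMaps

open Filter Topology

variable {ι : Type*} [Fintype ι] [DecidableEq ι]

/-- `h` is a strictly concave potential on the positive definite cone whose gradient for the trace
pairing is `F`, and which grows slowly enough for `h - tr (S ·)` to tend to `-∞` at the boundary of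
the cone and at infinity whenever `S` is positive definite. -/
structure IsStrictPotential (F : PosDefCone ι → PosDefCone ι) (h : PosDefCone ι → ℝ) : Prop where
  continuous : Continuous h
  lt_tangent (Y Z : PosDefCone ι) : Z ≠ Y → h Z < h Y + ((F Y).1 * (Z.1 - Y.1)).trace
  growth : ∃ σ > 0, ∀ ε > 0, ∃ c, ∀ Y, h Y ≤ c - σ * Y.1⁻¹.trace + ε * Y.1.trace

namespace IsStrictPotential

variable {F : PosDefCone ι → PosDefCone ι} {h : PosDefCone ι → ℝ}

theorem le_tangent (hF : IsStrictPotential F h) (Y Z : PosDefCone ι) :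
    h Z ≤ h Y + ((F Y).1 * (Z.1 - Y.1)).trace := by
  rcases eq_or_ne Z Y with rfl | hne
  · simp
  · exact (hF.lt_tangent Y Z hne).le

theorem sub_trace_le (hF : IsStrictPotential F h) (Y Z : PosDefCone ι) :
    h Z - ((F Y).1 * Z.1).trace ≤ h Y - ((F Y).1 * Y.1).trace := by
  have := hF.le_tangent Y Z
  rw [mul_sub, trace_sub] at this
  linarith

theorem injective (hF : IsStrictPotential F h) : Function.Injective F := by
  intro Y Z hYZ
  by_contra hne
  have hY := hF.lt_tangent Y Z (Ne.symm hne)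
  have hZ := hF.sub_trace_le Z Y
  rw [mul_sub, trace_sub] at hY
  rw [hYZ] at hY
  linarith

theorem exists_compact_superlevel (hF : IsStrictPotential F h) (S : PosDefCone ι) (m : ℝ) :
    ∃ K : Set (PosDefCone ι), IsCompact K ∧
      ∀ᶠ S' in 𝓝 S, ∀ Y, m ≤ h Y - (S'.1 * Y.1).trace → Y ∈ K := by
  obtain ⟨σ, hσ, hgrowth⟩ := hF.growth
  set τ := S.1⁻¹.trace + 1
  have hτ : 0 < τ := by have := S.2.inv.posSemidef.trace_nonneg; positivity
  obtain ⟨c, hc⟩ := hgrowth (2 * τ)⁻¹ (by positivity)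
  have htrace_inv : Continuous fun S' : PosDefCone ι => S'.1⁻¹.trace :=
    (continuous_inv_of_isUnit continuous_subtype_val fun S' => S'.2.isUnit).matrix_trace
  refine ⟨_, isCompact_setOf_trace_add_trace_inv_le ((c - m) * (2 * τ) + (c - m) / σ), ?_⟩
  filter_upwards [htrace_inv.continuousAt.eventually_lt_const (lt_add_one _)] with S' hS' Y hm
  have htr := Y.2.posSemidef.trace_nonneg
  have htr_inv := Y.2.inv.posSemidef.trace_nonneg
  have hpair : τ⁻¹ * Y.1.trace ≤ (S'.1 * Y.1).trace := by
    rw [inv_mul_le_iff₀ hτ]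
    exact (trace_le_trace_inv_mul_trace_mul S'.2 Y.2.posSemidef).trans
      (mul_le_mul_of_nonneg_right hS'.le (trace_mul_nonneg S'.2.posSemidef Y.2.posSemidef))
  have hsum : (2 * τ)⁻¹ * Y.1.trace + σ * Y.1⁻¹.trace ≤ c - m := by
    have := hc Y
    rw [mul_inv] at this ⊢
    linarith
  have hY : Y.1.trace ≤ (c - m) * (2 * τ) := by
    rw [← div_le_iff₀ (by positivity), div_eq_inv_mul]
    linarith [mul_nonneg hσ.le htr_inv]
  have hY_inv : Y.1⁻¹.trace ≤ (c - m) / σ := by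
    rw [le_div_iff₀' hσ]
    have : 0 ≤ (2 * τ)⁻¹ * Y.1.trace := by positivity
    linarith
  exact add_le_add hY hY_inv

theorem exists_forall_sub_trace_le (hF : IsStrictPotential F h) (S : PosDefCone ι) :
    ∃ Y, ∀ Z, h Z - (S.1 * Z.1).trace ≤ h Y - (S.1 * Y.1).trace := by
  obtain ⟨K, hK, hmem⟩ := hF.exists_compact_superlevel S
    (h ⟨1, PosDef.one⟩ - (S.1 * (1 : Matrix ι ι ℝ)).trace)
  have hmem := hmem.self_of_nhds
  obtain ⟨Y, -, hY⟩ := hK.exists_isMaxOn ⟨_, hmem _ le_rfl⟩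
    (f := fun Y => h Y - (S.1 * Y.1).trace)
    (hF.continuous.sub
      (continuous_const.matrix_mul continuous_subtype_val).matrix_trace).continuousOn
  refine ⟨Y, fun Z => ?_⟩
  by_cases hZ : Z ∈ K
  · exact hY hZ
  · exact (not_le.1 fun hle => hZ (hmem Z hle)).le.trans (hY (hmem _ le_rfl))

theorem trace_mul_le_of_forall_le (hF : IsStrictPotential F h) (hcont : Continuous F)
    {S : Matrix ι ι ℝ} {Y : PosDefCone ι}
    (hmax : ∀ Z, h Z - (S * Z.1).trace ≤ h Y - (S * Y.1).trace) {U : Matrix ι ι ℝ}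
    (hU : ∀ ε ∈ Set.Ioo (0 : ℝ) 1, (Y.1 + ε • U).PosDef) :
    ((F Y).1 * U).trace ≤ (S * U).trace := by
  obtain ⟨ε, -, hε, hε_lim⟩ := exists_seq_strictAnti_tendsto' (zero_lt_one (α := ℝ))
  let Z (k : ℕ) : PosDefCone ι := ⟨Y.1 + ε k • U, hU _ (hε k)⟩
  have hZ_lim : Tendsto Z atTop (𝓝 Y) := by
    rw [tendsto_subtype_rng]
    simpa using (tendsto_const_nhds (x := Y.1)).add (hε_lim.smul_const U)
  have hF_lim : Tendsto (fun k => ((F (Z k)).1 * U).trace) atTop (𝓝 ((F Y).1 * U).trace) :=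
    (((continuous_subtype_val.comp hcont).matrix_mul continuous_const).matrix_trace.tendsto Y).comp
      hZ_lim
  refine le_of_tendsto hF_lim (Eventually.of_forall fun k => ?_)
  have hmaxk := hmax (Z k)
  have htangent := hF.le_tangent (Z k) Y
  have hdiff : Y.1 - (Z k).1 = -(ε k • U) := by simp [Z]
  have hZk : (Z k).1 = Y.1 + ε k • U := rfl
  rw [hdiff, mul_neg, trace_neg, Matrix.mul_smul, trace_smul, smul_eq_mul] at htangent
  rw [hZk, mul_add, trace_add, Matrix.mul_smul, trace_smul, smul_eq_mul] at hmaxk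
  exact le_of_mul_le_mul_left (by linarith) (hε k).1

-- First order variations in the directions `x xᵀ` and `-Y`: `S - F Y` is positive semidefinite and
-- its pairing with the positive definite matrix `Y` is nonpositive, so it vanishes.
theorem eq_of_forall_le (hF : IsStrictPotential F h) (hcont : Continuous F)
    {S Y : PosDefCone ι} (hmax : ∀ Z, h Z - (S.1 * Z.1).trace ≤ h Y - (S.1 * Y.1).trace) :
    F Y = S := by
  have hpsd : (S.1 - (F Y).1).PosSemidef := by
    refine posSemidef_of_dotProduct_mulVec (by
      rw [transpose_sub, transpose_eq_of_posSemidef S.2.posSemidef,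
        transpose_eq_of_posSemidef (F Y).2.posSemidef]) fun x => ?_
    have := hF.trace_mul_le_of_forall_le hcont hmax (U := vecMulVec x x) fun ε hε =>
      Y.2.add_posSemidef ((posSemidef_vecMulVec_self x).smul hε.1.le)
    rw [← trace_mul_vecMulVec_self, sub_mul, trace_sub]
    linarith
  have hnonpos : (Y.1 * (S.1 - (F Y).1)).trace ≤ 0 := by
    have := hF.trace_mul_le_of_forall_le hcont hmax (U := -Y.1) fun ε hε => by
      rw [show Y.1 + ε • -Y.1 = (1 - ε) • Y.1 by module]
      exact Y.2.smul (sub_pos.2 hε.2)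
    rw [trace_mul_comm, sub_mul, trace_sub]
    simp only [mul_neg, trace_neg] at this
    linarith
  refine Subtype.ext (sub_eq_zero.1 ?_).symm
  by_contra hne
  exact (trace_mul_pos Y.2 hpsd hne).not_ge hnonpos

theorem isProperMap (hF : IsStrictPotential F h) (hcont : Continuous F) : IsProperMap F := by
  refine isProperMap_iff_ultrafilter_of_t2.2 ⟨hcont, fun 𝒰 S hS => ?_⟩
  let ref : PosDefCone ι := ⟨1, PosDef.one⟩
  obtain ⟨K, hK, hmem⟩ := hF.exists_compact_superlevel S (h ref - (S.1 * ref.1).trace - 1)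
  have hnear : ∀ᶠ S' : PosDefCone ι in 𝓝 S, (S'.1 * ref.1).trace < (S.1 * ref.1).trace + 1 :=
    (continuous_subtype_val.matrix_mul
      continuous_const).matrix_trace.continuousAt.eventually_lt_const (lt_add_one _)
  have hK_mem : K ∈ 𝒰 := by
    filter_upwards [hS.eventually hmem, hS.eventually hnear] with Y hY hlt
    exact hY Y (by linarith [hF.sub_trace_le Y ref])
  obtain ⟨Y, -, hY⟩ := hK.ultrafilter_le_nhds 𝒰 (le_principal_iff.2 hK_mem)
  exact ⟨Y, hY⟩

theorem isHomeomorph (hF : IsStrictPotential F h) (hcont : Continuous F) : IsHomeomorph F := by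
  refine isHomeomorph_iff_continuous_isClosedMap_bijective.2
    ⟨hcont, (hF.isProperMap hcont).isClosedMap, hF.injective, fun S => ?_⟩
  obtain ⟨Y, hY⟩ := hF.exists_forall_sub_trace_le S
  exact ⟨Y, hF.eq_of_forall_le hcont hY⟩

end IsStrictPotential

end GradientMaps

section StaticPotential

variable {ι : Type*} [Fintype ι] [DecidableEq ι]

/-- The covariance `(1 + M V)⁻¹ W (1 + M V)⁻ᵀ` of a noise of intensity `W` transported by
`(1 + M V)⁻¹`. -/
noncomputable def noiseCov (M W V : Matrix ι ι ℝ) : Matrix ι ι ℝ :=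
  (1 + M * V)⁻¹ * W * ((1 + M * V)⁻¹)ᵀ

/-- The function of `V` whose gradient for the trace pairing is `noiseCov M W`. -/
noncomputable def noisePotential (M W V : Matrix ι ι ℝ) : ℝ := (V * (1 + M * V)⁻¹ * W).trace

variable {E M V W Z : Matrix ι ι ℝ}

theorem mul_inv_one_add_mul_sub (hV : IsUnit (1 + M * V)) (hV' : IsUnit (1 + V * M))
    (hZ : IsUnit (1 + M * Z)) :
    Z * (1 + M * Z)⁻¹ - V * (1 + M * V)⁻¹ = (1 + V * M)⁻¹ * (Z - V) * (1 + M * Z)⁻¹ := by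
  have hcancel : (1 + V * M) * (Z * (1 + M * Z)⁻¹ - V * (1 + M * V)⁻¹) * (1 + M * Z) = Z - V :=
    calc (1 + V * M) * (Z * (1 + M * Z)⁻¹ - V * (1 + M * V)⁻¹) * (1 + M * Z)
        = (1 + V * M) * Z * ((1 + M * Z)⁻¹ * (1 + M * Z))
          - V * ((1 + M * V) * (1 + M * V)⁻¹) * (1 + M * Z) := by noncomm_ring
      _ = Z - V := by rw [inv_mul_of_isUnit hZ, mul_inv_of_isUnit hV]; noncomm_ring
  rw [← hcancel, ← Matrix.mul_assoc, ← Matrix.mul_assoc, inv_mul_of_isUnit hV', Matrix.one_mul,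
    Matrix.mul_assoc, mul_inv_of_isUnit hZ, Matrix.mul_one]

theorem inv_one_add_mul_sub (hV : IsUnit (1 + M * V)) (hZ : IsUnit (1 + M * Z)) :
    (1 + M * V)⁻¹ - (1 + M * Z)⁻¹ = (1 + M * Z)⁻¹ * M * (Z - V) * (1 + M * V)⁻¹ :=
  calc (1 + M * V)⁻¹ - (1 + M * Z)⁻¹
      = (1 + M * Z)⁻¹ * (1 + M * Z) * (1 + M * V)⁻¹
        - (1 + M * Z)⁻¹ * ((1 + M * V) * (1 + M * V)⁻¹) := by
        rw [inv_mul_of_isUnit hZ, mul_inv_of_isUnit hV, Matrix.one_mul, Matrix.mul_one]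
    _ = (1 + M * Z)⁻¹ * M * (Z - V) * (1 + M * V)⁻¹ := by noncomm_ring

theorem transpose_one_add_mul (hM : Mᵀ = M) (hV : Vᵀ = V) : (1 + M * V)ᵀ = 1 + V * M := by
  rw [transpose_add, transpose_one, transpose_mul, hM, hV]

-- The gap between the potential and its linearisation, in closed form: this yields at once that
-- the gradient is `noiseCov` and that the potential is concave.
theorem noisePotential_tangent_sub (hM : Mᵀ = M) (hVs : Vᵀ = V) (hZs : Zᵀ = Z)
    (hV : IsUnit (1 + M * V)) (hZ : IsUnit (1 + M * Z)) :
    noisePotential M W V + (noiseCov M W V * (Z - V)).trace - noisePotential M W Z =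
      (W * (((Z - V) * (1 + M * V)⁻¹)ᵀ * ((1 + M * Z)⁻¹ * M) *
        ((Z - V) * (1 + M * V)⁻¹))).trace := by
  have hV_transpose := transpose_one_add_mul hM hVs
  have hV' : IsUnit (1 + V * M) := by rwa [← hV_transpose, isUnit_transpose]
  have hinv_transpose : ((1 + M * V)⁻¹)ᵀ = (1 + V * M)⁻¹ := by
    rw [transpose_nonsing_inv, hV_transpose]
  have hgap : (1 + V * M)⁻¹ * (Z - V) * (1 + M * V)⁻¹
      - (Z * (1 + M * Z)⁻¹ - V * (1 + M * V)⁻¹) =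
      ((Z - V) * (1 + M * V)⁻¹)ᵀ * ((1 + M * Z)⁻¹ * M) * ((Z - V) * (1 + M * V)⁻¹) := by
    rw [mul_inv_one_add_mul_sub hV hV' hZ, ← mul_sub, inv_one_add_mul_sub hV hZ, transpose_mul,
      transpose_sub, hVs, hZs, hinv_transpose]
    simp only [Matrix.mul_assoc]
  have htrace : (noiseCov M W V * (Z - V)).trace =
      ((1 + V * M)⁻¹ * (Z - V) * (1 + M * V)⁻¹ * W).trace := by
    rw [noiseCov, hinv_transpose, Matrix.mul_assoc, trace_mul_comm,
      Matrix.mul_assoc ((1 + V * M)⁻¹ * (Z - V))]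
  rw [htrace, trace_mul_comm W, ← hgap, sub_mul, sub_mul, trace_sub, trace_sub, noisePotential,
    noisePotential]
  ring

theorem noisePotential_zero : noisePotential M W 0 = 0 := by
  rw [noisePotential, Matrix.zero_mul, Matrix.zero_mul, trace_zero]

theorem noiseCov_zero : noiseCov M W 0 = W := by
  rw [noiseCov, Matrix.mul_zero, add_zero, inv_one, transpose_one, Matrix.one_mul, Matrix.mul_one]

theorem continuous_noiseCov {X : Type*} [TopologicalSpace X] {M W V : X → Matrix ι ι ℝ}
    (hM : Continuous M) (hW : Continuous W) (hV : Continuous V)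
    (hu : ∀ x, IsUnit (1 + M x * V x)) : Continuous fun x => noiseCov (M x) (W x) (V x) := by
  have hinv := continuous_inv_of_isUnit (continuous_const.add (hM.matrix_mul hV)) hu
  exact (hinv.matrix_mul hW).matrix_mul hinv.matrix_transpose

theorem continuous_noisePotential {X : Type*} [TopologicalSpace X] {M W V : X → Matrix ι ι ℝ}
    (hM : Continuous M) (hW : Continuous W) (hV : Continuous V)
    (hu : ∀ x, IsUnit (1 + M x * V x)) :
    Continuous fun x => noisePotential (M x) (W x) (V x) :=
  ((hV.matrix_mul (continuous_inv_of_isUnit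
    (continuous_const.add (hM.matrix_mul hV)) hu)).matrix_mul hW).matrix_trace

theorem noiseCov_posSemidef (hW : W.PosSemidef) : (noiseCov M W V).PosSemidef :=
  posSemidef_mul_mul_transpose hW _

-- `M - M E⁻¹ M` is the parallel sum of `M` and `E - M`.
theorem posSemidef_sub_mul_inv_mul (hE : E.PosDef) (hM : M.PosSemidef)
    (hEM : (E - M).PosSemidef) : (M - M * E⁻¹ * M).PosSemidef := by
  have hM_inv_E : M * E⁻¹ * E = M := by
    rw [Matrix.mul_assoc, inv_mul_of_isUnit hE.isUnit, Matrix.mul_one]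
  have hE_inv_M : E * E⁻¹ * M = M := by rw [mul_inv_of_isUnit hE.isUnit, Matrix.one_mul]
  have hsum : M - M * E⁻¹ * M = M * E⁻¹ * (E - M) * (M * E⁻¹)ᵀ
      + (E - M) * E⁻¹ * M * ((E - M) * E⁻¹)ᵀ := by
    rw [transpose_mul, transpose_mul, transpose_eq_of_posSemidef hE.inv.posSemidef,
      transpose_eq_of_posSemidef hM, transpose_eq_of_posSemidef hEM, mul_sub (M * E⁻¹), hM_inv_E,
      sub_mul E, sub_mul (E * E⁻¹), hE_inv_M, mul_sub E⁻¹, inv_mul_of_isUnit hE.isUnit]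
    noncomm_ring
  rw [hsum]
  exact (posSemidef_mul_mul_transpose hEM _).add (posSemidef_mul_mul_transpose hM _)

theorem transpose_eq_of_posDef_add_inv (hE : E.PosDef) (hV : (V + E⁻¹).PosDef) : Vᵀ = V := by
  have := transpose_eq_of_posSemidef hV.posSemidef
  rwa [transpose_add, transpose_eq_of_posSemidef hE.inv.posSemidef, add_left_inj] at this

theorem add_mul_mul_eq : M + M * V * M = (M - M * E⁻¹ * M) + M * (V + E⁻¹) * M := by
  noncomm_ring

theorem isUnit_one_add_mul (hE : E.PosDef) (hM : M.PosSemidef) (hEM : (E - M).PosSemidef)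
    (hV : (V + E⁻¹).PosDef) : IsUnit (1 + M * V) := by
  have hMs := transpose_eq_of_posSemidef hM
  rw [← isUnit_transpose, transpose_one_add_mul hMs (transpose_eq_of_posDef_add_inv hE hV),
    ← mulVec_injective_iff_isUnit, ← coe_mulVecLin, ← LinearMap.ker_eq_bot,
    LinearMap.ker_eq_bot']
  intro v hv
  simp only [coe_mulVecLin, add_mulVec, one_mulVec, ← mulVec_mulVec] at hv
  have hdot (N : Matrix ι ι ℝ) : v ⬝ᵥ (M * N * M) *ᵥ v = (M *ᵥ v) ⬝ᵥ N *ᵥ (M *ᵥ v) := by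
    rw [← mulVec_mulVec, ← mulVec_mulVec, dotProduct_mulVec, ← mulVec_transpose, hMs]
  have hzero : v ⬝ᵥ (M + M * V * M) *ᵥ v = 0 := by
    rw [add_mulVec, dotProduct_add, hdot, dotProduct_mulVec, ← mulVec_transpose, hMs,
      ← dotProduct_add, hv, dotProduct_zero]
  have hMv : M *ᵥ v = 0 := by
    by_contra hne
    rw [add_mul_mul_eq (E := E), add_mulVec, dotProduct_add, hdot] at hzero
    have hpos := hV.dotProduct_mulVec_pos hne
    rw [star_trivial] at hpos
    linarith [dotProduct_mulVec_nonneg_of_posSemidef (posSemidef_sub_mul_inv_mul hE hM hEM) v]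
  simpa [hMv] using hv

theorem posSemidef_inv_one_add_mul_mul (hE : E.PosDef) (hM : M.PosSemidef)
    (hEM : (E - M).PosSemidef) (hV : (V + E⁻¹).PosDef) : ((1 + M * V)⁻¹ * M).PosSemidef := by
  have hMs := transpose_eq_of_posSemidef hM
  have hJ := isUnit_one_add_mul hE hM hEM hV
  have hsum : (M + M * V * M).PosSemidef := by
    have := posSemidef_mul_mul_transpose hV.posSemidef M
    rw [hMs] at this
    rw [add_mul_mul_eq (E := E)]
    exact (posSemidef_sub_mul_inv_mul hE hM hEM).add this
  have hcongr := posSemidef_mul_mul_transpose hsum (1 + M * V)⁻¹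
  have hfactor : M + M * V * M = M * (1 + M * V)ᵀ := by
    rw [transpose_one_add_mul hMs (transpose_eq_of_posDef_add_inv hE hV)]; noncomm_ring
  rwa [hfactor, Matrix.mul_assoc, Matrix.mul_assoc, ← transpose_mul, inv_mul_of_isUnit hJ,
    transpose_one, Matrix.mul_one] at hcongr

theorem posDef_inv_one_add_mul_mul (hE : E.PosDef) (hM : M.PosDef)
    (hEM : (E - M).PosSemidef) (hV : (V + E⁻¹).PosDef) : ((1 + M * V)⁻¹ * M).PosDef :=
  (posSemidef_inv_one_add_mul_mul hE hM.posSemidef hEM hV).posDef_iff_isUnit.2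
    ((isUnit_nonsing_inv_iff.2 (isUnit_one_add_mul hE hM.posSemidef hEM hV)).mul hM.isUnit)

theorem noisePotential_le_tangent (hE : E.PosDef) (hM : M.PosSemidef) (hEM : (E - M).PosSemidef)
    (hW : W.PosSemidef) (hV : (V + E⁻¹).PosDef) (hZ : (Z + E⁻¹).PosDef) :
    noisePotential M W Z ≤ noisePotential M W V + (noiseCov M W V * (Z - V)).trace := by
  rw [← sub_nonneg, noisePotential_tangent_sub (transpose_eq_of_posSemidef hM)
    (transpose_eq_of_posDef_add_inv hE hV) (transpose_eq_of_posDef_add_inv hE hZ)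
    (isUnit_one_add_mul hE hM hEM hV) (isUnit_one_add_mul hE hM hEM hZ)]
  exact trace_mul_nonneg hW
    (posSemidef_transpose_mul_mul (posSemidef_inv_one_add_mul_mul hE hM hEM hZ) _)

theorem noisePotential_lt_tangent (hE : E.PosDef) (hM : M.PosDef) (hEM : (E - M).PosSemidef)
    (hW : W.PosDef) (hV : (V + E⁻¹).PosDef) (hZ : (Z + E⁻¹).PosDef) (hne : Z ≠ V) :
    noisePotential M W Z < noisePotential M W V + (noiseCov M W V * (Z - V)).trace := by
  have hJ := isUnit_one_add_mul hE hM.posSemidef hEM hV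
  have hN := posDef_inv_one_add_mul_mul hE hM hEM hZ
  have hH : (Z - V) * (1 + M * V)⁻¹ ≠ 0 := fun h => hne <| sub_eq_zero.1 <|
    (isUnit_nonsing_inv_iff.2 hJ).mul_left_eq_zero.1 h
  rw [← sub_pos, noisePotential_tangent_sub (transpose_eq_of_posSemidef hM.posSemidef)
    (transpose_eq_of_posDef_add_inv hE hV) (transpose_eq_of_posDef_add_inv hE hZ) hJ
    (isUnit_one_add_mul hE hM.posSemidef hEM hZ)]
  exact trace_mul_pos hW (posSemidef_transpose_mul_mul hN.posSemidef _)
    (transpose_mul_mul_ne_zero hN hH)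

theorem noisePotential_eq_sub (hM : IsUnit M) (hJ : IsUnit (1 + M * V)) :
    noisePotential M W V =
      (M⁻¹ * W).trace - (M⁻¹ * ((1 + M * V)⁻¹ * M) * M⁻¹ * W).trace := by
  have hV : V * (1 + M * V)⁻¹ = M⁻¹ - M⁻¹ * ((1 + M * V)⁻¹ * M) * M⁻¹ :=
    calc V * (1 + M * V)⁻¹
        = M⁻¹ * M * (V * (1 + M * V)⁻¹) := by rw [inv_mul_of_isUnit hM, Matrix.one_mul]
      _ = M⁻¹ * ((1 + M * V) * (1 + M * V)⁻¹) - M⁻¹ * (1 + M * V)⁻¹ := by noncomm_ring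
      _ = M⁻¹ - M⁻¹ * ((1 + M * V)⁻¹ * M) * M⁻¹ := by
        rw [mul_inv_of_isUnit hJ, Matrix.mul_one]
        simp only [Matrix.mul_assoc, mul_inv_of_isUnit hM, Matrix.mul_one]
  rw [noisePotential, hV, sub_mul, trace_sub]

theorem noisePotential_le_trace_inv_mul (hE : E.PosDef) (hM : M.PosDef)
    (hEM : (E - M).PosSemidef) (hW : W.PosSemidef) (hV : (V + E⁻¹).PosDef) :
    noisePotential M W V ≤ (M⁻¹ * W).trace := by
  have hN := posSemidef_transpose_mul_mul
    (posSemidef_inv_one_add_mul_mul hE hM.posSemidef hEM hV) M⁻¹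
  rw [transpose_eq_of_posSemidef hM.inv.posSemidef] at hN
  rw [noisePotential_eq_sub hM.isUnit (isUnit_one_add_mul hE hM.posSemidef hEM hV)]
  linarith [trace_mul_nonneg hN hW]

theorem noisePotential_le_trace_mul (hE : E.PosDef) (hM : M.PosSemidef)
    (hEM : (E - M).PosSemidef) (hW : W.PosSemidef) (hV : (V + E⁻¹).PosDef) :
    noisePotential M W V ≤ W.trace * (V + E⁻¹).trace := by
  have htangent := noisePotential_le_tangent hE hM hEM hW (V := 0) (by simpa using hE.inv) hV
  rw [noisePotential_zero, noiseCov_zero, sub_zero, zero_add] at htangent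
  have hle := trace_mul_le_trace_mul_trace hW hV.posSemidef
  rw [mul_add, trace_add] at hle
  linarith [trace_mul_nonneg hW hE.inv.posSemidef]

theorem noisePotential_self_eq_sub (hE : E.PosDef) (hV : (V + E⁻¹).PosDef) :
    noisePotential E W V = (E⁻¹ * W).trace - (E⁻¹ * W * E⁻¹ * (V + E⁻¹)⁻¹).trace := by
  have hJ : 1 + E * V = E * (V + E⁻¹) := by
    rw [mul_add, mul_inv_of_isUnit hE.isUnit, add_comm]
  have hJ_inv : (1 + E * V)⁻¹ * E = (V + E⁻¹)⁻¹ := by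
    rw [hJ, Matrix.mul_inv_rev, Matrix.mul_assoc, inv_mul_of_isUnit hE.isUnit, Matrix.mul_one]
  rw [noisePotential_eq_sub hE.isUnit (hJ ▸ hE.isUnit.mul hV.isUnit), hJ_inv,
    Matrix.mul_assoc (E⁻¹ * (V + E⁻¹)⁻¹), trace_mul_comm (E⁻¹ * (V + E⁻¹)⁻¹), ← Matrix.mul_assoc]

end StaticPotential

section MatrixIntegral

open MeasureTheory Filter Topology

variable {ι T : Type*} [TopologicalSpace T] [CompactSpace T] [MeasurableSpace T]
  [OpensMeasurableSpace T]

theorem integrable_of_continuous {μ : Measure T} [IsFiniteMeasure μ] {g : T → ℝ}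
    (hg : Continuous g) : Integrable g μ :=
  hg.integrable_of_hasCompactSupport (.of_compactSpace g)

theorem exists_setIntegral_lt {μ : Measure T} [IsFiniteMeasure μ] {φ g : T → ℝ}
    (hφ : Continuous φ) (hpos : ∀ᵐ s ∂μ, 0 < φ s) (hg : Continuous g) {ε : ℝ} (hε : 0 < ε) :
    ∃ δ > 0, ∫ s in {s | φ s < δ}, g s ∂μ < ε := by
  let B (k : ℕ) : Set T := {s | φ s < 1 / ((k : ℝ) + 1)}
  have hB_anti : Antitone B := fun k l hkl s (hs : φ s < _) =>
    hs.trans_le (Nat.one_div_le_one_div hkl)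
  have hB_null : μ (⋂ k, B k) = 0 := by
    refine measure_mono_null (fun s hs => ?_) (ae_iff.1 hpos)
    rw [Set.mem_ofPred_eq, not_lt]
    exact ge_of_tendsto' tendsto_one_div_add_atTop_nhds_zero_nat fun k => (Set.mem_iInter.1 hs k).le
  have hlim := tendsto_setIntegral_of_antitone (μ := μ) (f := g)
    (fun k => (isOpen_lt hφ continuous_const : IsOpen (B k)).measurableSet) hB_anti
    ⟨0, (integrable_of_continuous hg).integrableOn⟩
  rw [setIntegral_measure_zero _ hB_null] at hlim
  obtain ⟨k, hk⟩ := (hlim.eventually_lt_const hε).exists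
  exact ⟨_, Nat.one_div_pos_of_nat, hk⟩

/-- The entrywise integral of a matrix valued function. -/
noncomputable def matrixIntegral (μ : Measure T) (f : T → Matrix ι ι ℝ) : Matrix ι ι ℝ :=
  Matrix.of fun i j => ∫ s, f s i j ∂μ

variable {μ : Measure T} [IsFiniteMeasure μ] {f : T → Matrix ι ι ℝ}

theorem continuous_integral {X : Type*} [TopologicalSpace X] {g : X → T → ℝ}
    (hg : Continuous g.uncurry) : Continuous fun x => ∫ s, g x s ∂μ := by
  rw [← continuousOn_univ]
  exact continuousOn_integral_of_compact_support isCompact_univ hg.continuousOn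
    fun _ _ _ h => absurd trivial h

theorem continuous_matrixIntegral {X : Type*} [TopologicalSpace X]
    {f : X → T → Matrix ι ι ℝ} (hf : Continuous f.uncurry) :
    Continuous fun x => matrixIntegral μ (f x) :=
  continuous_matrix fun i j => continuous_integral (hf.matrix_elem i j)

variable [Fintype ι]

theorem mul_matrixIntegral_mul (A B : Matrix ι ι ℝ) (hf : Continuous f) :
    A * matrixIntegral μ f * B = matrixIntegral μ fun s => A * f s * B := by
  ext i j
  have hint (k l : ι) : Integrable (fun s => A i l * f s l k * B k j) μ :=
    integrable_of_continuous (by have := hf.matrix_elem l k; fun_prop)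
  simp only [matrixIntegral, Matrix.mul_apply, of_apply, Finset.sum_mul]
  rw [integral_finsetSum _ fun k _ => integrable_finsetSum _ fun l _ => hint k l]
  refine Finset.sum_congr rfl fun k _ => ?_
  rw [integral_finsetSum _ fun l _ => hint k l]
  exact Finset.sum_congr rfl fun l _ => by rw [integral_mul_const, integral_const_mul]

theorem trace_matrixIntegral (hf : Continuous f) :
    (matrixIntegral μ f).trace = ∫ s, (f s).trace ∂μ := by
  simp only [matrixIntegral, trace, diag_apply, of_apply]
  rw [integral_finsetSum _ fun i _ => integrable_of_continuous (hf.matrix_elem i i)]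

theorem trace_matrixIntegral_mul (A : Matrix ι ι ℝ) (hf : Continuous f) :
    (matrixIntegral μ f * A).trace = ∫ s, (f s * A).trace ∂μ := by
  classical
  have := mul_matrixIntegral_mul (μ := μ) 1 A hf
  simp only [Matrix.one_mul] at this
  rw [this, trace_matrixIntegral (hf.matrix_mul continuous_const)]

theorem posSemidef_matrixIntegral {κ : Type*} [Finite κ] {f : T → Matrix κ κ ℝ}
    (hf : Continuous f) (hpsd : ∀ s, (f s).PosSemidef) : (matrixIntegral μ f).PosSemidef := by
  cases nonempty_fintype κ
  refine posSemidef_of_dotProduct_mulVec ?_ fun x => ?_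
  · ext i j
    exact integral_congr_ae (.of_forall fun s =>
      congrFun₂ (transpose_eq_of_posSemidef (hpsd s)) i j)
  · rw [← trace_mul_vecMulVec_self, trace_matrixIntegral_mul _ hf]
    exact integral_nonneg fun s => trace_mul_nonneg (hpsd s) (posSemidef_vecMulVec_self x)

end MatrixIntegral

section CovarianceMap

open MeasureTheory

variable {ι T : Type*} [Fintype ι] [DecidableEq ι] [TopologicalSpace T] [MeasurableSpace T]

theorem posDef_sub_inv_add_inv (E : Matrix ι ι ℝ) (Y : PosDefCone ι) :
    (Y.1 - E⁻¹ + E⁻¹).PosDef := by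
  simpa only [sub_add_cancel] using Y.2

theorem isUnit_one_add_mul_sub_inv {E : Matrix ι ι ℝ} (hE : E.PosDef) (Y : PosDefCone ι) :
    IsUnit (1 + E * (Y.1 - E⁻¹)) :=
  isUnit_one_add_mul hE hE.posSemidef (by simpa only [sub_self] using PosSemidef.zero)
    (posDef_sub_inv_add_inv _ Y)

/-- A family of noises of intensity `W s`, entering at `s` and steered by the remaining
controllability Gramian `M s ⪯ E`. -/
structure IsNoiseProfile (μ : Measure T) (E : Matrix ι ι ℝ) (M W : T → Matrix ι ι ℝ) : Prop where
  posDef : E.PosDef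
  continuous_gramian : Continuous M
  continuous_noise : Continuous W
  gramian (s : T) : (M s).PosSemidef
  sub_gramian (s : T) : (E - M s).PosSemidef
  noise (s : T) : (W s).PosSemidef
  ae_gramian_posDef : ∀ᵐ s ∂μ, (M s).PosDef

/-- The terminal covariance, up to a fixed congruence, as a function of the positive definite
parameter `Y = V + E⁻¹`: contributions of the initial covariance `S₀` and of the noise. -/
noncomputable def covarianceMap (μ : Measure T) (E : Matrix ι ι ℝ) (M W : T → Matrix ι ι ℝ)
    (S₀ Y : Matrix ι ι ℝ) : Matrix ι ι ℝ :=
  noiseCov E S₀ (Y - E⁻¹) + matrixIntegral μ fun s => noiseCov (M s) (W s) (Y - E⁻¹)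

/-- The function of `Y` whose gradient for the trace pairing is `covarianceMap`, the sum of the
potentials of the initial covariance and of the noises. -/
noncomputable def covariancePotential (μ : Measure T) (E : Matrix ι ι ℝ) (M W : T → Matrix ι ι ℝ)
    (S₀ Y : Matrix ι ι ℝ) : ℝ :=
  noisePotential E S₀ (Y - E⁻¹) + ∫ s, noisePotential (M s) (W s) (Y - E⁻¹) ∂μ

namespace IsNoiseProfile

variable {μ : Measure T} {E : Matrix ι ι ℝ} {M W : T → Matrix ι ι ℝ}

theorem isUnit (hN : IsNoiseProfile μ E M W) (Y : PosDefCone ι) (s : T) :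
    IsUnit (1 + M s * (Y.1 - E⁻¹)) :=
  isUnit_one_add_mul hN.posDef (hN.gramian s) (hN.sub_gramian s) (posDef_sub_inv_add_inv _ Y)

theorem continuous_noiseCov (hN : IsNoiseProfile μ E M W) :
    Continuous fun p : PosDefCone ι × T => noiseCov (M p.2) (W p.2) (p.1.1 - E⁻¹) :=
  _root_.continuous_noiseCov (hN.continuous_gramian.comp continuous_snd)
    (hN.continuous_noise.comp continuous_snd)
    ((continuous_subtype_val.comp continuous_fst).sub continuous_const)
    fun p => hN.isUnit p.1 p.2

theorem continuous_noisePotential (hN : IsNoiseProfile μ E M W) :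
    Continuous fun p : PosDefCone ι × T => noisePotential (M p.2) (W p.2) (p.1.1 - E⁻¹) :=
  _root_.continuous_noisePotential (hN.continuous_gramian.comp continuous_snd)
    (hN.continuous_noise.comp continuous_snd)
    ((continuous_subtype_val.comp continuous_fst).sub continuous_const)
    fun p => hN.isUnit p.1 p.2

theorem continuous_noiseCov_right (hN : IsNoiseProfile μ E M W) (Y : PosDefCone ι) :
    Continuous fun s => noiseCov (M s) (W s) (Y.1 - E⁻¹) :=
  _root_.continuous_noiseCov hN.continuous_gramian hN.continuous_noise continuous_const
    (hN.isUnit Y)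

variable [CompactSpace T] [OpensMeasurableSpace T] [IsFiniteMeasure μ]

theorem integrable_noisePotential (hN : IsNoiseProfile μ E M W) (Y : PosDefCone ι) :
    Integrable (fun s => noisePotential (M s) (W s) (Y.1 - E⁻¹)) μ :=
  integrable_of_continuous <| _root_.continuous_noisePotential hN.continuous_gramian
    hN.continuous_noise continuous_const (hN.isUnit Y)

-- Near the set where `M s` is singular, the potential is bounded by `tr (W s) * tr Y` and the
-- integral of `tr W` is small; away from it, `tr ((M s)⁻¹ * W s)` is a bound independent of `Y`.
theorem exists_integral_noisePotential_le (hN : IsNoiseProfile μ E M W) {ε : ℝ} (hε : 0 < ε) :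
    ∃ c, ∀ Y : PosDefCone ι,
      ∫ s, noisePotential (M s) (W s) (Y.1 - E⁻¹) ∂μ ≤ c + ε * Y.1.trace := by
  have htrace : Continuous fun s => (W s).trace := hN.continuous_noise.matrix_trace
  obtain ⟨δ, hδ, hsmall⟩ := exists_setIntegral_lt hN.continuous_gramian.matrix_det
    (hN.ae_gramian_posDef.mono fun s hs => hs.det_pos) htrace hε
  set B : Set T := {s | (M s).det < δ}
  have hB : IsOpen B := isOpen_lt hN.continuous_gramian.matrix_det continuous_const
  have hM_compl : ∀ s ∈ Bᶜ, (M s).PosDef := fun s hs =>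
    (hN.gramian s).posDef_iff_det_ne_zero.2 (hδ.trans_le (not_lt.1 hs)).ne'
  have hbound : ContinuousOn (fun s => ((M s)⁻¹ * W s).trace) Bᶜ :=
    continuous_id.matrix_trace.comp_continuousOn
      ((continuousOn_inv_of_isUnit hN.continuous_gramian.continuousOn fun s hs =>
        (hM_compl s hs).isUnit).mul hN.continuous_noise.continuousOn)
  obtain ⟨b, hb⟩ := hB.isClosed_compl.isCompact.exists_bound_of_continuousOn hbound
  refine ⟨∫ _ in Bᶜ, b ∂μ, fun Y => ?_⟩
  have hint := hN.integrable_noisePotential Y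
  have hcompl : ∫ s in Bᶜ, noisePotential (M s) (W s) (Y.1 - E⁻¹) ∂μ ≤ ∫ _ in Bᶜ, b ∂μ :=
    setIntegral_mono_on hint.integrableOn (integrable_const b).integrableOn
      hB.isClosed_compl.measurableSet fun s hs =>
        (noisePotential_le_trace_inv_mul hN.posDef (hM_compl s hs) (hN.sub_gramian s) (hN.noise s)
          (posDef_sub_inv_add_inv _ Y)).trans ((le_abs_self _).trans (hb s hs))
  have hnear : ∫ s in B, noisePotential (M s) (W s) (Y.1 - E⁻¹) ∂μ ≤ ε * Y.1.trace :=
    calc ∫ s in B, noisePotential (M s) (W s) (Y.1 - E⁻¹) ∂μ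
        ≤ ∫ s in B, (W s).trace * Y.1.trace ∂μ :=
          setIntegral_mono hint.integrableOn
            ((integrable_of_continuous htrace).mul_const _).integrableOn fun s => by
              simpa only [sub_add_cancel] using noisePotential_le_trace_mul hN.posDef
                (hN.gramian s) (hN.sub_gramian s) (hN.noise s) (posDef_sub_inv_add_inv _ Y)
      _ = (∫ s in B, (W s).trace ∂μ) * Y.1.trace := integral_mul_const _ _
      _ ≤ ε * Y.1.trace := mul_le_mul_of_nonneg_right hsmall.le Y.2.posSemidef.trace_nonneg
  rw [← integral_add_compl hB.measurableSet hint, add_comm]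
  exact add_le_add hcompl hnear

variable {S₀ : Matrix ι ι ℝ}

theorem covarianceMap_posDef (hN : IsNoiseProfile μ E M W) (hS₀ : S₀.PosDef)
    (Y : PosDefCone ι) : (covarianceMap μ E M W S₀ Y.1).PosDef :=
  (posDef_mul_mul_transpose hS₀ <| isUnit_nonsing_inv_iff.2 <|
    isUnit_one_add_mul_sub_inv hN.posDef Y).add_posSemidef
    (posSemidef_matrixIntegral (hN.continuous_noiseCov_right Y)
      fun s => noiseCov_posSemidef (hN.noise s))

theorem continuous_covarianceMap (hN : IsNoiseProfile μ E M W) :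
    Continuous fun Y : PosDefCone ι => covarianceMap μ E M W S₀ Y.1 :=
  (_root_.continuous_noiseCov continuous_const continuous_const
    (continuous_subtype_val.sub continuous_const) (isUnit_one_add_mul_sub_inv hN.posDef)).add
      (continuous_matrixIntegral (f := fun (Y : PosDefCone ι) s =>
        noiseCov (M s) (W s) (Y.1 - E⁻¹)) hN.continuous_noiseCov)

theorem continuous_covariancePotential (hN : IsNoiseProfile μ E M W) :
    Continuous fun Y : PosDefCone ι => covariancePotential μ E M W S₀ Y.1 :=
  (_root_.continuous_noisePotential continuous_const continuous_const
    (continuous_subtype_val.sub continuous_const) (isUnit_one_add_mul_sub_inv hN.posDef)).add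
      (continuous_integral (g := fun (Y : PosDefCone ι) s =>
        noisePotential (M s) (W s) (Y.1 - E⁻¹)) hN.continuous_noisePotential)

theorem covariancePotential_lt_tangent (hN : IsNoiseProfile μ E M W) (hS₀ : S₀.PosDef)
    {Y Z : PosDefCone ι} (hne : Z ≠ Y) :
    covariancePotential μ E M W S₀ Z.1 <
      covariancePotential μ E M W S₀ Y.1 + (covarianceMap μ E M W S₀ Y.1 * (Z.1 - Y.1)).trace := by
  have hinitial := noisePotential_lt_tangent hN.posDef hN.posDef
    (by simpa only [sub_self] using PosSemidef.zero) hS₀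
    (posDef_sub_inv_add_inv _ Y) (posDef_sub_inv_add_inv _ Z)
    (sub_left_injective.ne (Subtype.coe_ne_coe.2 hne))
  rw [sub_sub_sub_cancel_right] at hinitial
  have hcov := hN.continuous_noiseCov_right Y
  have htrace := integrable_of_continuous (μ := μ)
    (hcov.matrix_mul (continuous_const (y := Z.1 - Y.1))).matrix_trace
  have hnoise : ∫ s, noisePotential (M s) (W s) (Z.1 - E⁻¹) ∂μ ≤
      ∫ s, noisePotential (M s) (W s) (Y.1 - E⁻¹) ∂μ +
        (matrixIntegral μ (fun s => noiseCov (M s) (W s) (Y.1 - E⁻¹)) * (Z.1 - Y.1)).trace := by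
    rw [trace_matrixIntegral_mul _ hcov, ← integral_add (hN.integrable_noisePotential Y) htrace]
    refine integral_mono (hN.integrable_noisePotential Z)
      ((hN.integrable_noisePotential Y).add htrace) fun s => ?_
    simpa only [sub_sub_sub_cancel_right] using noisePotential_le_tangent hN.posDef
      (hN.gramian s) (hN.sub_gramian s) (hN.noise s) (posDef_sub_inv_add_inv _ Y)
      (posDef_sub_inv_add_inv _ Z)
  rw [covarianceMap, add_mul, trace_add, covariancePotential, covariancePotential]
  linarith

theorem exists_covariancePotential_le (hN : IsNoiseProfile μ E M W) (hS₀ : S₀.PosDef) :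
    ∃ σ > 0, ∀ ε > 0, ∃ c, ∀ Y : PosDefCone ι,
      covariancePotential μ E M W S₀ Y.1 ≤ c - σ * Y.1⁻¹.trace + ε * Y.1.trace := by
  have hpos := posDef_mul_mul_transpose hS₀ hN.posDef.inv.isUnit
  rw [transpose_eq_of_posSemidef hN.posDef.inv.posSemidef] at hpos
  obtain ⟨σ, hσ, hle⟩ := exists_pos_mul_trace_le_trace_mul hpos
  refine ⟨σ, hσ, fun ε hε => ?_⟩
  obtain ⟨c, hc⟩ := hN.exists_integral_noisePotential_le hε
  refine ⟨(E⁻¹ * S₀).trace + c, fun Y => ?_⟩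
  have hinitial := noisePotential_self_eq_sub (W := S₀) hN.posDef (posDef_sub_inv_add_inv _ Y)
  rw [sub_add_cancel] at hinitial
  rw [covariancePotential, hinitial]
  linarith [hc Y, hle _ Y.2.inv.posSemidef]

theorem isStrictPotential (hN : IsNoiseProfile μ E M W) (hS₀ : S₀.PosDef) : IsStrictPotential
    (fun Y => ⟨covarianceMap μ E M W S₀ Y.1, hN.covarianceMap_posDef hS₀ Y⟩)
    (fun Y => covariancePotential μ E M W S₀ Y.1) where
  continuous := hN.continuous_covariancePotential
  lt_tangent _ _ := hN.covariancePotential_lt_tangent hS₀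
  growth := hN.exists_covariancePotential_le hS₀

theorem isHomeomorph_covarianceMap (hN : IsNoiseProfile μ E M W) (hS₀ : S₀.PosDef) :
    IsHomeomorph fun Y : PosDefCone ι =>
      (⟨covarianceMap μ E M W S₀ Y.1, hN.covarianceMap_posDef hS₀ Y⟩ : PosDefCone ι) :=
  (hN.isStrictPotential hS₀).isHomeomorph (hN.continuous_covarianceMap.subtype_mk _)

end IsNoiseProfile

end CovarianceMap

section MatrixDerivative

open scoped Matrix.Norms.Operator

theorem hasDerivAt_matrix {κ l : Type*} [Finite κ] [Finite l] {M : ℝ → Matrix κ l ℝ}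
    {M' : Matrix κ l ℝ} {t : ℝ} :
    HasDerivAt M M' t ↔ ∀ i j, HasDerivAt (fun s => M s i j) (M' i j) t := by
  cases nonempty_fintype κ
  cases nonempty_fintype l
  exact hasDerivAt_pi.trans (forall_congr' fun _ => hasDerivAt_pi)

theorem hasDerivAt_mulVec {κ l : Type*} [Finite κ] [Fintype l] {M : ℝ → Matrix κ l ℝ}
    {M' : Matrix κ l ℝ} {u : ℝ → l → ℝ} {u' : l → ℝ} {t : ℝ} (hM : HasDerivAt M M' t)
    (hu : HasDerivAt u u' t) :
    HasDerivAt (fun s => M s *ᵥ u s) (M' *ᵥ u t + M t *ᵥ u') t := by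
  cases nonempty_fintype κ
  refine hasDerivAt_pi.2 fun i => ?_
  simp only [Pi.add_apply, mulVec, dotProduct, ← Finset.sum_add_distrib]
  exact HasDerivAt.fun_sum fun k _ =>
    (hasDerivAt_matrix.1 hM i k).mul (hasDerivAt_pi.1 hu k)

theorem hasDerivAt_matrix_transpose {κ l : Type*} [Finite κ] [Finite l] {M : ℝ → Matrix κ l ℝ}
    {M' : Matrix κ l ℝ} {t : ℝ} (hM : HasDerivAt M M' t) :
    HasDerivAt (fun s => (M s)ᵀ) M'ᵀ t :=
  hasDerivAt_matrix.2 fun i j => hasDerivAt_matrix.1 hM j i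

variable {ι : Type*} [Fintype ι] {M : ℝ → Matrix ι ι ℝ} {t : ℝ}

theorem hasDerivAt_matrix_inv [DecidableEq ι] {M' : Matrix ι ι ℝ} (hM : HasDerivAt M M' t)
    (hu : IsUnit (M t)) :
    HasDerivAt (fun s => (M s)⁻¹) (-((M t)⁻¹ * M' * (M t)⁻¹)) t := by
  obtain ⟨u, hu⟩ := hu
  have hinv := hasFDerivAt_ringInverse (𝕜 := ℝ) u
  rw [hu] at hinv
  have := hinv.comp_hasDerivAt t hM
  simp only [Function.comp_def, ← nonsing_inv_eq_ringInverse] at this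
  rw [← hu, ← coe_units_inv]
  exact this

theorem hasDerivAt_dotProduct_mulVec {M' : Matrix ι ι ℝ} (hM : HasDerivAt M M' t) (v : ι → ℝ) :
    HasDerivAt (fun s => v ⬝ᵥ M s *ᵥ v) (v ⬝ᵥ M' *ᵥ v) t := by
  have := hasDerivAt_mulVec hM (hasDerivAt_const t v)
  simp only [mulVec_zero, add_zero] at this
  exact HasDerivAt.fun_sum fun i _ => (hasDerivAt_pi.1 this i).const_mul _

variable {M' : ℝ → Matrix ι ι ℝ} {s : ℝ}

theorem monotoneOn_dotProduct_mulVec (hM : ∀ r ∈ Set.Icc s t, HasDerivAt M (M' r) r)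
    (hM' : ∀ r ∈ Set.Icc s t, (M' r).PosSemidef) (v : ι → ℝ) :
    MonotoneOn (fun r => v ⬝ᵥ M r *ᵥ v) (Set.Icc s t) := by
  have hderiv r (hr : r ∈ Set.Icc s t) := hasDerivAt_dotProduct_mulVec (hM r hr) v
  refine monotoneOn_of_deriv_nonneg (convex_Icc s t)
    (fun r hr => (hderiv r hr).continuousAt.continuousWithinAt)
    (fun r hr => (hderiv r (interior_subset hr)).differentiableAt.differentiableWithinAt)
    fun r hr => ?_
  rw [(hderiv r (interior_subset hr)).deriv]
  exact dotProduct_mulVec_nonneg_of_posSemidef (hM' r (interior_subset hr)) v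

theorem dotProduct_mulVec_deriv_eq_zero (hM : ∀ r ∈ Set.Icc s t, HasDerivAt M (M' r) r)
    (hM' : ∀ r ∈ Set.Icc s t, (M' r).PosSemidef) {v : ι → ℝ}
    (hle : v ⬝ᵥ M t *ᵥ v ≤ v ⬝ᵥ M s *ᵥ v) {r : ℝ} (hr : r ∈ Set.Ioo s t) :
    v ⬝ᵥ M' r *ᵥ v = 0 := by
  have hmono := monotoneOn_dotProduct_mulVec hM hM' v
  have hst := hr.1.le.trans hr.2.le
  have hconst : (fun r => v ⬝ᵥ M r *ᵥ v) =ᶠ[nhds r] fun _ => v ⬝ᵥ M s *ᵥ v := by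
    filter_upwards [Ioo_mem_nhds hr.1 hr.2] with τ hτ
    have hτ' := Set.Ioo_subset_Icc_self hτ
    exact le_antisymm ((hmono hτ' (Set.right_mem_Icc.2 hst) hτ.2.le).trans hle)
      (hmono (Set.left_mem_Icc.2 hst) hτ' hτ.1.le)
  exact (hasDerivAt_dotProduct_mulVec (hM r (Set.Ioo_subset_Icc_self hr)) v).unique
    ((hasDerivAt_const r _).congr_of_eventuallyEq hconst)

end MatrixDerivative

section Symplectic

variable {ι R : Type*} [Fintype ι] [DecidableEq ι] [CommRing R]

theorem fromBlocks_one_zero_one_mem_symplecticGroup {P : Matrix ι ι R} (hP : Pᵀ = P) :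
    fromBlocks 1 0 P 1 ∈ symplecticGroup ι R := by
  simp [SymplecticGroup.fromBlocks_mem_iff, hP]

variable {S : Matrix (ι ⊕ ι) (ι ⊕ ι) R}

theorem mem_symplecticGroup_iff_toBlocks : S ∈ symplecticGroup ι R ↔
    S.toBlocks₁₁ᵀ * S.toBlocks₂₁ = S.toBlocks₂₁ᵀ * S.toBlocks₁₁ ∧
      S.toBlocks₁₂ᵀ * S.toBlocks₂₂ = S.toBlocks₂₂ᵀ * S.toBlocks₁₂ ∧
      S.toBlocks₁₁ᵀ * S.toBlocks₂₂ - S.toBlocks₂₁ᵀ * S.toBlocks₁₂ = 1 := by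
  rw [← SymplecticGroup.fromBlocks_mem_iff, fromBlocks_toBlocks]

theorem transpose_toBlocks₂₁_mul_inv_toBlocks₁₁ (hS : S ∈ symplecticGroup ι R)
    (hu : IsUnit S.toBlocks₁₁) :
    (S.toBlocks₂₁ * S.toBlocks₁₁⁻¹)ᵀ = S.toBlocks₂₁ * S.toBlocks₁₁⁻¹ := by
  have hinv : (S.toBlocks₁₁⁻¹)ᵀ * S.toBlocks₁₁ᵀ = 1 := by
    rw [← transpose_mul, mul_inv_of_isUnit hu, transpose_one]
  calc (S.toBlocks₂₁ * S.toBlocks₁₁⁻¹)ᵀ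
      = (S.toBlocks₁₁⁻¹)ᵀ * (S.toBlocks₂₁ᵀ * S.toBlocks₁₁) * S.toBlocks₁₁⁻¹ := by
        rw [transpose_mul, ← Matrix.mul_assoc, Matrix.mul_assoc _ _ S.toBlocks₁₁⁻¹,
          mul_inv_of_isUnit hu, Matrix.mul_one]
    _ = S.toBlocks₂₁ * S.toBlocks₁₁⁻¹ := by
        rw [← (mem_symplecticGroup_iff_toBlocks.1 hS).1, ← Matrix.mul_assoc, hinv, Matrix.one_mul]

theorem transpose_inv_toBlocks₁₁_mul_toBlocks₁₂ (hS : S ∈ symplecticGroup ι R)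
    (hu : IsUnit S.toBlocks₁₁) :
    (S.toBlocks₁₁⁻¹ * S.toBlocks₁₂)ᵀ = S.toBlocks₁₁⁻¹ * S.toBlocks₁₂ := by
  have := transpose_toBlocks₂₁_mul_inv_toBlocks₁₁ (SymplecticGroup.transpose_mem hS)
    ((isUnit_transpose _).2 hu)
  rw [show Sᵀ.toBlocks₂₁ = S.toBlocks₁₂ᵀ from rfl, show Sᵀ.toBlocks₁₁ = S.toBlocks₁₁ᵀ from rfl,
    ← transpose_nonsing_inv, ← transpose_mul, transpose_transpose] at this
  exact this.symm

theorem toBlocks₂₂_sub_eq_transpose_inv (hS : S ∈ symplecticGroup ι R)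
    (hu : IsUnit S.toBlocks₁₁) :
    S.toBlocks₂₂ - S.toBlocks₂₁ * S.toBlocks₁₁⁻¹ * S.toBlocks₁₂ = (S.toBlocks₁₁⁻¹)ᵀ := by
  have hinv : (S.toBlocks₁₁⁻¹)ᵀ * S.toBlocks₁₁ᵀ = 1 := by
    rw [← transpose_mul, mul_inv_of_isUnit hu, transpose_one]
  symm
  calc (S.toBlocks₁₁⁻¹)ᵀ
      = (S.toBlocks₁₁⁻¹)ᵀ * (S.toBlocks₁₁ᵀ * S.toBlocks₂₂ - S.toBlocks₂₁ᵀ * S.toBlocks₁₂) := by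
        rw [(mem_symplecticGroup_iff_toBlocks.1 hS).2.2, Matrix.mul_one]
    _ = S.toBlocks₂₂ - (S.toBlocks₂₁ * S.toBlocks₁₁⁻¹)ᵀ * S.toBlocks₁₂ := by
        rw [mul_sub, ← Matrix.mul_assoc, hinv, Matrix.one_mul, ← Matrix.mul_assoc, transpose_mul]
    _ = S.toBlocks₂₂ - S.toBlocks₂₁ * S.toBlocks₁₁⁻¹ * S.toBlocks₁₂ := by
        rw [transpose_toBlocks₂₁_mul_inv_toBlocks₁₁ hS hu]

end Symplectic

section HamiltonianFlow

variable {ι : Type*} [Fintype ι] [DecidableEq ι]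

/-- The coefficient matrix `[[A, -G], [-Q, -Aᵀ]]` of a linear Hamiltonian system, with input
gain `G` (in control problems `G = B Bᵀ`) and running cost `Q`. -/
def hamiltonianMatrix (A G Q : Matrix ι ι ℝ) : Matrix (ι ⊕ ι) (ι ⊕ ι) ℝ :=
  fromBlocks A (-G) (-Q) (-Aᵀ)

/-- `Ψ` is a symplectic fundamental matrix of the linear Hamiltonian system with positive
semidefinite input gain `G` and running cost `Q`. It need not be normalised at any time. -/
structure IsHamiltonianFlow (A G Q : ℝ → Matrix ι ι ℝ) (Ψ : ℝ → Matrix (ι ⊕ ι) (ι ⊕ ι) ℝ) :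
    Prop where
  posSemidef_gain : ∀ t, (G t).PosSemidef
  posSemidef_cost : ∀ t, (Q t).PosSemidef
  hasDerivAt : ∀ t, HasDerivAt Ψ (hamiltonianMatrix (A t) (G t) (Q t) * Ψ t) t
  mem_symplecticGroup : ∀ t, Ψ t ∈ symplecticGroup ι ℝ

theorem hamiltonianMatrix_transpose_mul_J_add {A G Q : Matrix ι ι ℝ} (hG : Gᵀ = G) (hQ : Qᵀ = Q) :
    (hamiltonianMatrix A G Q)ᵀ * J ι ℝ + J ι ℝ * hamiltonianMatrix A G Q = 0 := by
  simp [hamiltonianMatrix, J, fromBlocks_transpose, fromBlocks_multiply, fromBlocks_add, hG, hQ]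

namespace IsHamiltonianFlow

variable {A G Q : ℝ → Matrix ι ι ℝ} {Ψ : ℝ → Matrix (ι ⊕ ι) (ι ⊕ ι) ℝ}

open scoped Matrix.Norms.Operator in
theorem of_mem_symplecticGroup (hG : ∀ t, (G t).PosSemidef) (hQ : ∀ t, (Q t).PosSemidef)
    (hΨ : ∀ t, HasDerivAt Ψ (hamiltonianMatrix (A t) (G t) (Q t) * Ψ t) t) {s : ℝ}
    (hs : Ψ s ∈ symplecticGroup ι ℝ) : IsHamiltonianFlow A G Q Ψ := by
  refine ⟨hG, hQ, hΨ, fun t => ?_⟩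
  have hderiv (r : ℝ) : HasDerivAt (fun r => (Ψ r)ᵀ * J ι ℝ * Ψ r) 0 r := by
    refine (((hasDerivAt_matrix_transpose (hΨ r)).mul_const (J ι ℝ)).fun_mul
      (hΨ r)).congr_deriv ?_
    rw [transpose_mul, Matrix.mul_assoc (Ψ r)ᵀ, Matrix.mul_assoc (Ψ r)ᵀ (J ι ℝ),
      ← Matrix.mul_assoc (J ι ℝ), Matrix.mul_assoc (Ψ r)ᵀ, ← mul_add, ← add_mul,
      hamiltonianMatrix_transpose_mul_J_add (transpose_eq_of_posSemidef (hG r))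
        (transpose_eq_of_posSemidef (hQ r)), Matrix.zero_mul, Matrix.mul_zero]
  have hconst := is_const_of_deriv_eq_zero (fun r => (hderiv r).differentiableAt)
    (fun r => (hderiv r).deriv) t s
  exact SymplecticGroup.mem_iff'.2 (hconst.trans (SymplecticGroup.mem_iff'.1 hs))

open scoped Matrix.Norms.Operator in
theorem mul_right (hΨ : IsHamiltonianFlow A G Q Ψ) {S : Matrix (ι ⊕ ι) (ι ⊕ ι) ℝ}
    (hS : S ∈ symplecticGroup ι ℝ) : IsHamiltonianFlow A G Q fun t => Ψ t * S where
  posSemidef_gain := hΨ.posSemidef_gain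
  posSemidef_cost := hΨ.posSemidef_cost
  hasDerivAt t := by
    rw [← Matrix.mul_assoc]
    exact (hΨ.hasDerivAt t).mul_const S
  mem_symplecticGroup t := mul_mem (hΨ.mem_symplecticGroup t) hS

theorem hasDerivAt_toBlocks₁₁ (hΨ : IsHamiltonianFlow A G Q Ψ) (t : ℝ) :
    HasDerivAt (fun t => (Ψ t).toBlocks₁₁)
      (A t * (Ψ t).toBlocks₁₁ - G t * (Ψ t).toBlocks₂₁) t := by
  have h := hΨ.hasDerivAt t
  rw [← fromBlocks_toBlocks (Ψ t), hamiltonianMatrix, fromBlocks_multiply, neg_mul,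
    ← sub_eq_add_neg] at h
  exact hasDerivAt_matrix.2 fun i j => hasDerivAt_matrix.1 h (Sum.inl i) (Sum.inl j)

theorem hasDerivAt_toBlocks₁₂ (hΨ : IsHamiltonianFlow A G Q Ψ) (t : ℝ) :
    HasDerivAt (fun t => (Ψ t).toBlocks₁₂)
      (A t * (Ψ t).toBlocks₁₂ - G t * (Ψ t).toBlocks₂₂) t := by
  have h := hΨ.hasDerivAt t
  rw [← fromBlocks_toBlocks (Ψ t), hamiltonianMatrix, fromBlocks_multiply, neg_mul _ (toBlocks₂₂ _),
    ← sub_eq_add_neg] at h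
  exact hasDerivAt_matrix.2 fun i j => hasDerivAt_matrix.1 h (Sum.inl i) (Sum.inr j)

theorem hasDerivAt_toBlocks₂₁ (hΨ : IsHamiltonianFlow A G Q Ψ) (t : ℝ) :
    HasDerivAt (fun t => (Ψ t).toBlocks₂₁)
      (-(Q t * (Ψ t).toBlocks₁₁) - (A t)ᵀ * (Ψ t).toBlocks₂₁) t := by
  have h := hΨ.hasDerivAt t
  rw [← fromBlocks_toBlocks (Ψ t), hamiltonianMatrix, fromBlocks_multiply, neg_mul (A t)ᵀ,
    neg_mul (Q t) (toBlocks₁₁ _), neg_mul (A t)ᵀ, ← sub_eq_add_neg] at h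
  exact hasDerivAt_matrix.2 fun i j => hasDerivAt_matrix.1 h (Sum.inr i) (Sum.inl j)

open scoped Matrix.Norms.Operator in
theorem hasDerivAt_neg_transpose_toBlocks₁₁_mul_toBlocks₂₁ (hΨ : IsHamiltonianFlow A G Q Ψ)
    (t : ℝ) :
    HasDerivAt (fun t => -((Ψ t).toBlocks₁₁ᵀ * (Ψ t).toBlocks₂₁))
      ((Ψ t).toBlocks₂₁ᵀ * G t * (Ψ t).toBlocks₂₁ +
        (Ψ t).toBlocks₁₁ᵀ * Q t * (Ψ t).toBlocks₁₁) t := by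
  refine ((hasDerivAt_matrix_transpose (hΨ.hasDerivAt_toBlocks₁₁ t)).fun_mul
    (hΨ.hasDerivAt_toBlocks₂₁ t)).fun_neg.congr_deriv ?_
  rw [transpose_sub, transpose_mul, transpose_mul,
    transpose_eq_of_posSemidef (hΨ.posSemidef_gain t)]
  noncomm_ring

/-- `XᵀY` decreases in time, so `X v = 0` before `t` would make `v ⬝ᵥ XᵀY v` nonpositive at `t`. -/
theorem isUnit_toBlocks₁₁_of_le (hΨ : IsHamiltonianFlow A G Q Ψ) {s t : ℝ} (hst : s ≤ t)
    (ht : ((Ψ t).toBlocks₁₁ᵀ * (Ψ t).toBlocks₂₁).PosDef) : IsUnit (Ψ s).toBlocks₁₁ := by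
  rw [← mulVec_injective_iff_isUnit, ← coe_mulVecLin, ← LinearMap.ker_eq_bot,
    LinearMap.ker_eq_bot']
  intro v (hv : (Ψ s).toBlocks₁₁ *ᵥ v = 0)
  have hle := monotoneOn_dotProduct_mulVec
    (fun r _ => hΨ.hasDerivAt_neg_transpose_toBlocks₁₁_mul_toBlocks₂₁ r)
    (fun r _ => (posSemidef_transpose_mul_mul (hΨ.posSemidef_gain r) _).add
      (posSemidef_transpose_mul_mul (hΨ.posSemidef_cost r) _)) v
    (Set.left_mem_Icc.2 hst) (Set.right_mem_Icc.2 hst) hst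
  have hs : v ⬝ᵥ ((Ψ s).toBlocks₁₁ᵀ * (Ψ s).toBlocks₂₁) *ᵥ v = 0 := by
    rw [← mulVec_mulVec, dotProduct_mulVec, vecMul_transpose, hv, zero_dotProduct]
  by_contra hv0
  have hpos := ht.dotProduct_mulVec_pos hv0
  simp only [neg_mulVec, dotProduct_neg, hs, star_trivial] at hle hpos
  linarith

/-- The witness is the initial slope of the solution which is `(1, 1)` at the final time. -/
theorem exists_isUnit_toBlocks₁₁_add_mul (hΨ : IsHamiltonianFlow A G Q Ψ) {s t : ℝ}
    (hst : s ≤ t) (hs : Ψ s = 1) :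
    ∃ P : Matrix ι ι ℝ, Pᵀ = P ∧
      ∀ r ≤ t, IsUnit ((Ψ r).toBlocks₁₁ + (Ψ r).toBlocks₁₂ * P) := by
  let S : symplecticGroup ι ℝ := ⟨Ψ t, hΨ.mem_symplecticGroup t⟩⁻¹ *
    ⟨fromBlocks 1 0 1 1, fromBlocks_one_zero_one_mem_symplecticGroup transpose_one⟩
  have hS : Ψ t * (S : Matrix (ι ⊕ ι) (ι ⊕ ι) ℝ) = fromBlocks 1 0 1 1 :=
    congrArg Subtype.val (mul_inv_cancel_left (⟨Ψ t, hΨ.mem_symplecticGroup t⟩ :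
      symplecticGroup ι ℝ) _)
  have hunit r (hr : r ≤ t) : IsUnit (Ψ r * S).toBlocks₁₁ := by
    refine (hΨ.mul_right S.2).isUnit_toBlocks₁₁_of_le hr ?_
    simp only [hS, toBlocks_fromBlocks₁₁, toBlocks_fromBlocks₂₁, transpose_one, Matrix.mul_one]
    exact PosDef.one
  have hS_unit : IsUnit (S : Matrix (ι ⊕ ι) (ι ⊕ ι) ℝ).toBlocks₁₁ := by
    simpa only [hs, Matrix.one_mul] using hunit s hst
  refine ⟨_, transpose_toBlocks₂₁_mul_inv_toBlocks₁₁ S.2 hS_unit, fun r hr => ?_⟩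
  have hfactor : (Ψ r * S).toBlocks₁₁ = ((Ψ r).toBlocks₁₁ + (Ψ r).toBlocks₁₂ *
      ((S : Matrix (ι ⊕ ι) (ι ⊕ ι) ℝ).toBlocks₂₁ *
        (S : Matrix (ι ⊕ ι) (ι ⊕ ι) ℝ).toBlocks₁₁⁻¹)) *
      (S : Matrix (ι ⊕ ι) (ι ⊕ ι) ℝ).toBlocks₁₁ := by
    rw [add_mul, ← Matrix.mul_assoc, Matrix.mul_assoc _ _⁻¹, inv_mul_of_isUnit hS_unit,
      Matrix.mul_one]
    conv_lhs => rw [← fromBlocks_toBlocks (Ψ r),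
      ← fromBlocks_toBlocks (S : Matrix (ι ⊕ ι) (ι ⊕ ι) ℝ), fromBlocks_multiply]
    rfl
  exact isUnit_of_mul_isUnit_left (hfactor ▸ hunit r hr)

end IsHamiltonianFlow

end HamiltonianFlow

section Gramian

variable {ι : Type*} [Fintype ι]

/-- Controllability of `(A, G)` on `I` in dual form: every solution `v` of the adjoint equation
`v' = -Aᵀ v` with `G v = 0` on `I` has a zero in `I`. -/
def IsControllableOn (A G : ℝ → Matrix ι ι ℝ) (I : Set ℝ) : Prop :=
  ∀ v : ℝ → ι → ℝ, (∀ r ∈ I, HasDerivAt v (-((A r)ᵀ *ᵥ v r)) r) → (∀ r ∈ I, G r *ᵥ v r = 0) →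
    ∃ r ∈ I, v r = 0

variable [DecidableEq ι] {A G Q : ℝ → Matrix ι ι ℝ} {Ψ : ℝ → Matrix (ι ⊕ ι) (ι ⊕ ι) ℝ} {s t : ℝ}

/-- The Gramian `-Ψ₁₁⁻¹ Ψ₁₂` at one time of a Hamiltonian flow with state blocks `Ψ₁₁`, `Ψ₁₂`. -/
noncomputable def flowGramian (S : Matrix (ι ⊕ ι) (ι ⊕ ι) ℝ) : Matrix ι ι ℝ :=
  -(S.toBlocks₁₁⁻¹ * S.toBlocks₁₂)

namespace IsHamiltonianFlow

theorem transpose_flowGramian (hΨ : IsHamiltonianFlow A G Q Ψ) (hu : IsUnit (Ψ t).toBlocks₁₁) :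
    (flowGramian (Ψ t))ᵀ = flowGramian (Ψ t) := by
  rw [flowGramian, transpose_neg,
    transpose_inv_toBlocks₁₁_mul_toBlocks₁₂ (hΨ.mem_symplecticGroup t) hu]

open scoped Matrix.Norms.Operator in
theorem hasDerivAt_flowGramian (hΨ : IsHamiltonianFlow A G Q Ψ)
    (hu : IsUnit (Ψ t).toBlocks₁₁) :
    HasDerivAt (fun t => flowGramian (Ψ t))
      ((Ψ t).toBlocks₁₁⁻¹ * G t * ((Ψ t).toBlocks₁₁⁻¹)ᵀ) t := by
  refine ((hasDerivAt_matrix_inv (hΨ.hasDerivAt_toBlocks₁₁ t) hu).fun_mul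
    (hΨ.hasDerivAt_toBlocks₁₂ t)).fun_neg.congr_deriv ?_
  rw [← toBlocks₂₂_sub_eq_transpose_inv (hΨ.mem_symplecticGroup t) hu, mul_sub _ (A t * _),
    ← Matrix.mul_assoc _ (A t), sub_mul, Matrix.mul_assoc (_ * A t), mul_inv_of_isUnit hu]
  noncomm_ring

theorem hasDerivAt_transpose_inv_mulVec (hΨ : IsHamiltonianFlow A G Q Ψ)
    (hu : IsUnit (Ψ t).toBlocks₁₁) {v : ι → ℝ}
    (hv : G t *ᵥ (((Ψ t).toBlocks₁₁⁻¹)ᵀ *ᵥ v) = 0) :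
    HasDerivAt (fun t => ((Ψ t).toBlocks₁₁⁻¹)ᵀ *ᵥ v)
      (-((A t)ᵀ *ᵥ (((Ψ t).toBlocks₁₁⁻¹)ᵀ *ᵥ v))) t := by
  refine (hasDerivAt_mulVec (hasDerivAt_matrix_transpose
    (hasDerivAt_matrix_inv (hΨ.hasDerivAt_toBlocks₁₁ t) hu))
    (hasDerivAt_const t v)).congr_deriv ?_
  have hinv : ((Ψ t).toBlocks₁₁⁻¹)ᵀ * (Ψ t).toBlocks₁₁ᵀ = 1 := by
    rw [← transpose_mul, mul_inv_of_isUnit hu, transpose_one]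
  simp only [transpose_neg, transpose_mul, transpose_sub,
    transpose_eq_of_posSemidef (hΨ.posSemidef_gain t), mulVec_zero, add_zero, neg_mulVec,
    ← mulVec_mulVec, sub_mulVec, hv, sub_zero]
  rw [mulVec_mulVec _ _ (_ᵀ), hinv, one_mulVec]

theorem posDef_flowGramian_sub (hΨ : IsHamiltonianFlow A G Q Ψ) (hst : s ≤ t)
    (hu : ∀ r ∈ Set.Icc s t, IsUnit (Ψ r).toBlocks₁₁)
    (hctrl : IsControllableOn A G (Set.Ioo s t)) :
    (flowGramian (Ψ t) - flowGramian (Ψ s)).PosDef := by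
  have hs := Set.left_mem_Icc.2 hst
  have ht := Set.right_mem_Icc.2 hst
  have hderiv r (hr : r ∈ Set.Icc s t) := hΨ.hasDerivAt_flowGramian (hu r hr)
  have hpsd r (_ : r ∈ Set.Icc s t) :=
    posSemidef_mul_mul_transpose (hΨ.posSemidef_gain r) (Ψ r).toBlocks₁₁⁻¹
  refine posDef_of_dotProduct_mulVec
    (by rw [transpose_sub, hΨ.transpose_flowGramian (hu t ht), hΨ.transpose_flowGramian (hu s hs)])
    fun v hv => ?_
  by_contra! hle
  rw [sub_mulVec, dotProduct_sub, sub_nonpos] at hle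
  have hker r (hr : r ∈ Set.Ioo s t) : G r *ᵥ (((Ψ r).toBlocks₁₁⁻¹)ᵀ *ᵥ v) = 0 := by
    have hzero := dotProduct_mulVec_deriv_eq_zero hderiv hpsd hle hr
    rw [← mulVec_mulVec, ← mulVec_mulVec, dotProduct_mulVec, ← mulVec_transpose] at hzero
    exact ((hΨ.posSemidef_gain r).dotProduct_mulVec_zero_iff _).1 hzero
  obtain ⟨r, hr, hzero⟩ := hctrl _ (fun r hr => hΨ.hasDerivAt_transpose_inv_mulVec
    (hu r (Set.Ioo_subset_Icc_self hr)) (hker r hr)) hker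
  have hr_unit : IsUnit (Ψ r).toBlocks₁₁⁻¹ :=
    isUnit_nonsing_inv_iff.2 (hu r (Set.Ioo_subset_Icc_self hr))
  exact hv (mulVec_injective_of_isUnit ((isUnit_transpose _).2 hr_unit)
    (hzero.trans (mulVec_zero _).symm))

end IsHamiltonianFlow

end Gramian

section Controllability

variable {n p : ℕ} {A : ℝ → Matrix (Fin n) (Fin n) ℝ} {B : ℝ → Matrix (Fin n) (Fin p) ℝ}
  {Γ : ℕ → ℝ → Matrix (Fin n) (Fin p) ℝ} {t : ℝ}

theorem eq_zero_of_rank_ctrbMat (h : (ctrbMat Γ t).rank = n) {v : Fin n → ℝ}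
    (hv : ∀ k < n, (Γ k t)ᵀ *ᵥ v = 0) : v = 0 := by
  have hrows : LinearIndependent ℝ (ctrbMat Γ t).row := by
    rw [linearIndependent_iff_card_eq_finrank_span, Set.finrank, ← rank_eq_finrank_span_row, h,
      Fintype.card_fin]
  refine vecMul_injective_iff.2 hrows ?_
  simp only [zero_vecMul]
  ext ⟨k, j⟩
  rw [← mulVec_transpose]
  exact congrFun (hv k k.2) j

theorem IsCtrbMatSeq.transpose_mulVec_eq_zero (hΓ : IsCtrbMatSeq A B Γ) {I : Set ℝ}
    (hI : IsOpen I) {v : ℝ → Fin n → ℝ}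
    (hv : ∀ r ∈ I, HasDerivAt v (-((A r)ᵀ *ᵥ v r)) r) (hB : ∀ r ∈ I, (B r)ᵀ *ᵥ v r = 0) {k : ℕ}
    (hk : k ≤ n) : ∀ r ∈ I, (Γ k r)ᵀ *ᵥ v r = 0 := by
  induction k with
  | zero => exact fun r hr => hΓ.1 ▸ hB r hr
  | succ k ih =>
    intro r hr
    have hderiv := hasDerivAt_mulVec
      (hasDerivAt_matrix_transpose (hasDerivAt_matrix.2 (hΓ.2 k hk r))) (hv r hr)
    have hzero : (fun r => (Γ k r)ᵀ *ᵥ v r) =ᶠ[nhds r] fun _ => 0 := by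
      filter_upwards [hI.mem_nhds hr] with τ hτ using ih (by omega) τ hτ
    have := hderiv.unique ((hasDerivAt_const r _).congr_of_eventuallyEq hzero)
    simpa only [transpose_add, transpose_mul, add_mulVec, mulVec_neg, mulVec_mulVec,
      add_neg_cancel_right] using this

theorem TotallyControllable.isControllableOn (hTC : TotallyControllable Γ)
    (hΓ : IsCtrbMatSeq A B Γ) {t₀ t₁ : ℝ} (h₀ : 0 ≤ t₀) (h₀₁ : t₀ < t₁) (h₁ : t₁ ≤ 1) :
    IsControllableOn A (fun t => B t * (B t)ᵀ) (Set.Ioo t₀ t₁) := by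
  intro v hv hG
  obtain ⟨r, hr, hrank⟩ := hTC t₀ t₁ h₀ h₀₁ h₁
  have hB : ∀ r ∈ Set.Ioo t₀ t₁, (B r)ᵀ *ᵥ v r = 0 := fun r hr => by
    simpa only [← conjTranspose_eq_transpose_of_trivial, self_mul_conjTranspose_mulVec_eq_zero]
      using hG r hr
  exact ⟨r, hr, eq_zero_of_rank_ctrbMat hrank fun k hk =>
    hΓ.transpose_mulVec_eq_zero isOpen_Ioo hv hB hk.le r hr⟩

end Controllability

section GramianFactorization

open MeasureTheory

variable {ι : Type*} [Fintype ι] [DecidableEq ι]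

/-- Congruence by an invertible matrix, as a self-homeomorphism of the positive definite cone. -/
noncomputable def PosDefCone.congr {X : Matrix ι ι ℝ} (hX : IsUnit X) :
    PosDefCone ι ≃ₜ PosDefCone ι where
  toFun Y := ⟨X * Y.1 * Xᵀ, posDef_mul_mul_transpose Y.2 hX⟩
  invFun Y := ⟨X⁻¹ * Y.1 * (X⁻¹)ᵀ,
    posDef_mul_mul_transpose Y.2 (isUnit_nonsing_inv_iff.2 hX)⟩
  left_inv Y := Subtype.ext <|
    calc X⁻¹ * (X * Y.1 * Xᵀ) * (X⁻¹)ᵀ = X⁻¹ * X * Y.1 * (X⁻¹ * X)ᵀ := by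
          simp only [transpose_mul, Matrix.mul_assoc]
      _ = Y.1 := by rw [inv_mul_of_isUnit hX, transpose_one, Matrix.one_mul, Matrix.mul_one]
  right_inv Y := Subtype.ext <|
    calc X * (X⁻¹ * Y.1 * (X⁻¹)ᵀ) * Xᵀ = X * X⁻¹ * Y.1 * (X * X⁻¹)ᵀ := by
          simp only [transpose_mul, Matrix.mul_assoc]
      _ = Y.1 := by rw [mul_inv_of_isUnit hX, transpose_one, Matrix.one_mul, Matrix.mul_one]
  continuous_toFun := Continuous.subtype_mk (by fun_prop) _
  continuous_invFun := Continuous.subtype_mk (by fun_prop) _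

/-- Inversion, as a self-homeomorphism of the positive definite cone. -/
noncomputable def PosDefCone.inv : PosDefCone ι ≃ₜ PosDefCone ι where
  toFun Y := ⟨Y.1⁻¹, Y.2.inv⟩
  invFun Y := ⟨Y.1⁻¹, Y.2.inv⟩
  left_inv Y := Subtype.ext (nonsing_inv_nonsing_inv _ Y.2.det_pos.ne'.isUnit)
  right_inv Y := Subtype.ext (nonsing_inv_nonsing_inv _ Y.2.det_pos.ne'.isUnit)
  continuous_toFun :=
    (continuous_inv_of_isUnit continuous_subtype_val fun Y => Y.2.isUnit).subtype_mk _
  continuous_invFun :=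
    (continuous_inv_of_isUnit continuous_subtype_val fun Y => Y.2.isUnit).subtype_mk _

/-- The reflection `P ↦ K - P` of the symmetric matrices strictly below `K` onto the positive
definite cone. -/
def PosDefCone.subLeft {K : Matrix ι ι ℝ} (hK : Kᵀ = K) :
    {P : Matrix ι ι ℝ // Pᵀ = P ∧ (K - P).PosDef} ≃ₜ PosDefCone ι where
  toFun P := ⟨K - P.1, P.2.2⟩
  invFun Y := ⟨K - Y.1, by rw [transpose_sub, hK, transpose_eq_of_posSemidef Y.2.posSemidef],
    by simpa only [sub_sub_cancel] using Y.2⟩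
  left_inv P := Subtype.ext (sub_sub_cancel K P.1)
  right_inv Y := Subtype.ext (sub_sub_cancel K Y.1)
  continuous_toFun := Continuous.subtype_mk (by fun_prop) _
  continuous_invFun := Continuous.subtype_mk (by fun_prop) _

/-- The reference state blocks `X` and the Gramian `L` which on `[0,1]` factor the closed-loop
transition matrices `a + b P` of all initial slopes `P`, relative to a reference slope `P₀`. -/
structure IsGramianFactorization (a b : ℝ → Matrix ι ι ℝ) (P₀ : Matrix ι ι ℝ)
    (X L : ℝ → Matrix ι ι ℝ) : Prop where
  transpose_eq : P₀ᵀ = P₀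
  isUnit : ∀ t ∈ Set.Icc (0 : ℝ) 1, IsUnit (X t)
  continuousOn_state : ContinuousOn X (Set.Icc 0 1)
  continuousOn_gramian : ContinuousOn L (Set.Icc 0 1)
  gramian_zero : L 0 = 0
  posDef_gramian_sub : ∀ s t, 0 ≤ s → s < t → t ≤ 1 → (L t - L s).PosDef
  add_mul_eq : ∀ t ∈ Set.Icc (0 : ℝ) 1, ∀ P, a t + b t * P = X t * (1 - L t * (P - P₀))

open scoped Matrix.Norms.Operator in
theorem IsHamiltonianFlow.exists_isGramianFactorization {A G Q : ℝ → Matrix ι ι ℝ}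
    {Ψ : ℝ → Matrix (ι ⊕ ι) (ι ⊕ ι) ℝ} (hΨ : IsHamiltonianFlow A G Q Ψ) (h₀ : Ψ 0 = 1)
    (hctrl : ∀ s t, 0 ≤ s → s < t → t ≤ 1 → IsControllableOn A G (Set.Ioo s t)) :
    ∃ P₀ X L, IsGramianFactorization (fun t => (Ψ t).toBlocks₁₁) (fun t => (Ψ t).toBlocks₁₂)
      P₀ X L := by
  obtain ⟨P₀, hP₀, hunit⟩ := hΨ.exists_isUnit_toBlocks₁₁_add_mul zero_le_one h₀
  set Ψ' : ℝ → Matrix (ι ⊕ ι) (ι ⊕ ι) ℝ := fun t => Ψ t * fromBlocks 1 0 P₀ 1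
  have hΨ' : IsHamiltonianFlow A G Q Ψ' :=
    hΨ.mul_right (fromBlocks_one_zero_one_mem_symplecticGroup hP₀)
  have hblocks t : Ψ' t = fromBlocks ((Ψ t).toBlocks₁₁ + (Ψ t).toBlocks₁₂ * P₀) (Ψ t).toBlocks₁₂
      ((Ψ t).toBlocks₂₁ + (Ψ t).toBlocks₂₂ * P₀) (Ψ t).toBlocks₂₂ := by
    conv_lhs => simp only [Ψ']; rw [← fromBlocks_toBlocks (Ψ t), fromBlocks_multiply]
    simp only [Matrix.mul_one, Matrix.mul_zero, zero_add]
  have hX t : (Ψ' t).toBlocks₁₁ = (Ψ t).toBlocks₁₁ + (Ψ t).toBlocks₁₂ * P₀ := by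
    rw [hblocks, toBlocks_fromBlocks₁₁]
  have hb t : (Ψ' t).toBlocks₁₂ = (Ψ t).toBlocks₁₂ := by rw [hblocks, toBlocks_fromBlocks₁₂]
  have hunit' t (ht : t ≤ 1) : IsUnit (Ψ' t).toBlocks₁₁ := hX t ▸ hunit t ht
  refine ⟨P₀, fun t => (Ψ' t).toBlocks₁₁, fun t => flowGramian (Ψ' t), hP₀,
    fun t ht => hunit' t ht.2, fun t _ =>
      (hΨ'.hasDerivAt_toBlocks₁₁ t).continuousAt.continuousWithinAt, fun t ht =>
      (hΨ'.hasDerivAt_flowGramian (hunit' t ht.2)).continuousAt.continuousWithinAt, ?_,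
    fun s t hs hst ht => hΨ'.posDef_flowGramian_sub hst.le (fun r hr => hunit' r (hr.2.trans ht))
      (hctrl s t hs hst ht), fun t ht P => ?_⟩
  · have : (1 : Matrix (ι ⊕ ι) (ι ⊕ ι) ℝ).toBlocks₁₂ = 0 := by
      rw [← fromBlocks_one, toBlocks_fromBlocks₁₂]
    simp only [flowGramian, hb, h₀, this, Matrix.mul_zero, neg_zero]
  · have hcancel := mul_inv_of_isUnit (hunit' t ht.2)
    rw [flowGramian, hb, mul_sub, Matrix.mul_one, ← Matrix.mul_assoc, mul_neg,
      ← Matrix.mul_assoc, hcancel, Matrix.one_mul, hX]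
    noncomm_ring

theorem one_sub_mul_inv_sub_eq {E R : Matrix ι ι ℝ} (hE : IsUnit E) (hR : IsUnit R)
    (L : Matrix ι ι ℝ) :
    1 - L * (E⁻¹ - R) = (1 + (E - L) * ((E * R * E)⁻¹ - E⁻¹)) * (E * R) := by
  have hinv : (E * R * E)⁻¹ * (E * R) = E⁻¹ := by
    rw [Matrix.mul_inv_rev, Matrix.mul_assoc, inv_mul_of_isUnit (hE.mul hR), Matrix.mul_one]
  rw [add_mul, Matrix.mul_assoc (E - L), sub_mul _ E⁻¹, hinv, ← Matrix.mul_assoc E⁻¹,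
    inv_mul_of_isUnit hE, Matrix.one_mul, Matrix.one_mul, sub_mul E, mul_sub E,
    mul_inv_of_isUnit hE]
  abel

theorem inv_mul_mul_mul_transpose_inv (X J T N : Matrix ι ι ℝ) :
    (X * J * T)⁻¹ * N * ((X * J * T)⁻¹)ᵀ =
      T⁻¹ * (J⁻¹ * (X⁻¹ * N * (X⁻¹)ᵀ) * (J⁻¹)ᵀ) * (T⁻¹)ᵀ := by
  simp only [Matrix.mul_inv_rev, transpose_mul, Matrix.mul_assoc]

theorem mul_mul_transpose_add_eq {T : Matrix ι ι ℝ} (hT : IsUnit T) (X S N : Matrix ι ι ℝ) :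
    X * T * (S + T⁻¹ * N * (T⁻¹)ᵀ) * (X * T)ᵀ = X * (T * S * Tᵀ + N) * Xᵀ := by
  have hcancel : T * T⁻¹ = 1 := mul_inv_of_isUnit hT
  calc X * T * (S + T⁻¹ * N * (T⁻¹)ᵀ) * (X * T)ᵀ
      = X * (T * S * Tᵀ + T * T⁻¹ * N * (T * T⁻¹)ᵀ) * Xᵀ := by
        simp only [transpose_mul, mul_add, add_mul, Matrix.mul_assoc]
    _ = X * (T * S * Tᵀ + N) * Xᵀ := by
        rw [hcancel, transpose_one, Matrix.one_mul, Matrix.mul_one]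

namespace IsGramianFactorization

variable {a b X L : ℝ → Matrix ι ι ℝ} {P₀ P : Matrix ι ι ℝ}

theorem posSemidef_gramian (h : IsGramianFactorization a b P₀ X L) {t : ℝ}
    (ht : t ∈ Set.Icc (0 : ℝ) 1) : (L t).PosSemidef := by
  rcases ht.1.eq_or_lt with rfl | h₀
  · rw [h.gramian_zero]
    exact PosSemidef.zero
  · simpa only [h.gramian_zero, sub_zero] using (h.posDef_gramian_sub 0 t le_rfl h₀ ht.2).posSemidef

theorem posDef_gramian_one (h : IsGramianFactorization a b P₀ X L) : (L 1).PosDef := by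
  simpa only [h.gramian_zero, sub_zero] using h.posDef_gramian_sub 0 1 le_rfl one_pos le_rfl

theorem neg_inv_mul_eq (h : IsGramianFactorization a b P₀ X L) :
    -((b 1)⁻¹ * a 1) = (L 1)⁻¹ + P₀ := by
  have hone : (1 : ℝ) ∈ Set.Icc (0 : ℝ) 1 := Set.right_mem_Icc.2 zero_le_one
  have ha : a 1 = X 1 * (1 + L 1 * P₀) := by simpa using h.add_mul_eq 1 hone 0
  have hb : b 1 = -(X 1 * L 1) := by
    rw [← Matrix.mul_one (b 1), eq_sub_of_add_eq' (h.add_mul_eq 1 hone 1), ha]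
    noncomm_ring
  have hX := inv_mul_of_isUnit (h.isUnit 1 hone)
  have hL := inv_mul_of_isUnit h.posDef_gramian_one.isUnit
  have hb_inv : (b 1)⁻¹ = -((L 1)⁻¹ * (X 1)⁻¹) := by
    refine inv_eq_left_inv ?_
    rw [hb, neg_mul_neg, Matrix.mul_assoc, ← Matrix.mul_assoc (X 1)⁻¹, hX, Matrix.one_mul, hL]
  rw [hb_inv, ha, neg_mul, neg_neg, Matrix.mul_assoc, ← Matrix.mul_assoc (X 1)⁻¹, hX,
    Matrix.one_mul, mul_add, Matrix.mul_one, ← Matrix.mul_assoc, hL, Matrix.one_mul]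

theorem transpose_neg_inv_mul (h : IsGramianFactorization a b P₀ X L) :
    (-((b 1)⁻¹ * a 1))ᵀ = -((b 1)⁻¹ * a 1) := by
  rw [h.neg_inv_mul_eq, transpose_add, h.transpose_eq,
    transpose_eq_of_posSemidef h.posDef_gramian_one.inv.posSemidef]

/-- The coordinate `Y = (E (K - P) E)⁻¹` of an initial slope `P`, where `E = L 1` and
`K = -b(1)⁻¹ a(1)` is the upper bound of the admissible slopes. -/
noncomputable def chart (h : IsGramianFactorization a b P₀ X L) :
    {P : Matrix ι ι ℝ // Pᵀ = P ∧ (-((b 1)⁻¹ * a 1) - P).PosDef} ≃ₜ PosDefCone ι :=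
  ((PosDefCone.subLeft h.transpose_neg_inv_mul).trans
    (PosDefCone.congr h.posDef_gramian_one.isUnit)).trans PosDefCone.inv

theorem one_sub_gramian_mul_eq_chart (h : IsGramianFactorization a b P₀ X L)
    (P : {P : Matrix ι ι ℝ // Pᵀ = P ∧ (-((b 1)⁻¹ * a 1) - P).PosDef}) (t : ℝ) :
    1 - L t * (P.1 - P₀) = (1 + (L 1 - L t) * ((h.chart P).1 - (L 1)⁻¹)) *
      (L 1 * (-((b 1)⁻¹ * a 1) - P.1)) := by
  have hchart : (h.chart P).1 = (L 1 * (-((b 1)⁻¹ * a 1) - P.1) * (L 1)ᵀ)⁻¹ := rfl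
  have hsub : P.1 - P₀ = (L 1)⁻¹ - (-((b 1)⁻¹ * a 1) - P.1) :=
    eq_sub_of_add_eq ((sub_add_sub_cancel' _ _ _).trans (sub_eq_of_eq_add h.neg_inv_mul_eq))
  rw [hchart, transpose_eq_of_posSemidef h.posDef_gramian_one.posSemidef, hsub,
    one_sub_mul_inv_sub_eq h.posDef_gramian_one.isUnit P.2.2.isUnit]

theorem add_mul_eq_chart (h : IsGramianFactorization a b P₀ X L)
    (P : {P : Matrix ι ι ℝ // Pᵀ = P ∧ (-((b 1)⁻¹ * a 1) - P).PosDef}) {t : ℝ}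
    (ht : t ∈ Set.Icc (0 : ℝ) 1) :
    a t + b t * P.1 = X t * (1 + (L 1 - L t) * ((h.chart P).1 - (L 1)⁻¹)) *
      (L 1 * (-((b 1)⁻¹ * a 1) - P.1)) := by
  rw [h.add_mul_eq t ht, h.one_sub_gramian_mul_eq_chart P, Matrix.mul_assoc]

theorem isNoiseProfile (h : IsGramianFactorization a b P₀ X L) {N : ℝ → Matrix ι ι ℝ}
    (hN : Continuous N) (hN_psd : ∀ t, (N t).PosSemidef) :
    IsNoiseProfile (volume : Measure unitInterval) (L 1) (fun s => L 1 - L s)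
      (fun s => (X s)⁻¹ * N s * ((X s)⁻¹)ᵀ) where
  posDef := h.posDef_gramian_one
  continuous_gramian := continuous_const.sub h.continuousOn_gramian.domRestrict
  continuous_noise := by
    have hX_inv := (continuousOn_inv_of_isUnit h.continuousOn_state h.isUnit).domRestrict
    exact (hX_inv.matrix_mul (hN.comp continuous_subtype_val)).matrix_mul hX_inv.matrix_transpose
  gramian s := by
    rcases s.2.2.eq_or_lt with hs | hs
    · rw [hs, sub_self]
      exact PosSemidef.zero
    · exact (h.posDef_gramian_sub s 1 s.2.1 hs le_rfl).posSemidef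
  sub_gramian s := by
    rw [sub_sub_cancel]
    exact h.posSemidef_gramian s.2
  noise s := posSemidef_mul_mul_transpose (hN_psd s) _
  ae_gramian_posDef := by
    filter_upwards [compl_mem_ae_iff.2 (measure_singleton (1 : unitInterval))] with s hs
    exact h.posDef_gramian_sub s 1 s.2.1 (unitInterval.lt_one_iff_ne_one.2 hs) le_rfl

theorem isUnit_add_mul (h : IsGramianFactorization a b P₀ X L)
    (P : {P : Matrix ι ι ℝ // Pᵀ = P ∧ (-((b 1)⁻¹ * a 1) - P).PosDef}) {t : ℝ}
    (ht : t ∈ Set.Icc (0 : ℝ) 1) : IsUnit (a t + b t * P.1) := by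
  rw [h.add_mul_eq_chart P ht]
  have hN := h.isNoiseProfile (N := 0) continuous_const fun _ => PosSemidef.zero
  exact ((h.isUnit t ht).mul (hN.isUnit (h.chart P) ⟨t, ht⟩)).mul
    (h.posDef_gramian_one.isUnit.mul P.2.2.isUnit)

theorem terminal_covariance_eq (h : IsGramianFactorization a b P₀ X L) {N : ℝ → Matrix ι ι ℝ}
    (hN : Continuous N) (hN_psd : ∀ t, (N t).PosSemidef) (S₀ : Matrix ι ι ℝ)
    (P : {P : Matrix ι ι ℝ // Pᵀ = P ∧ (-((b 1)⁻¹ * a 1) - P).PosDef}) :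
    (a 1 + b 1 * P.1) * (S₀ + matrixIntegral (volume : Measure unitInterval) fun s =>
        (a s + b s * P.1)⁻¹ * N s * ((a s + b s * P.1)⁻¹)ᵀ) * (a 1 + b 1 * P.1)ᵀ =
      X 1 * covarianceMap (volume : Measure unitInterval) (L 1) (fun s => L 1 - L s)
        (fun s => (X s)⁻¹ * N s * ((X s)⁻¹)ᵀ) S₀ (h.chart P).1 * (X 1)ᵀ := by
  have hT : IsUnit (L 1 * (-((b 1)⁻¹ * a 1) - P.1)) :=
    h.posDef_gramian_one.isUnit.mul P.2.2.isUnit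
  have hinitial := h.one_sub_gramian_mul_eq_chart P 0
  have hstate (s : unitInterval) := h.add_mul_eq_chart P s.2
  have hfinal := h.add_mul_eq_chart P (Set.right_mem_Icc.2 zero_le_one)
  rw [sub_self, Matrix.zero_mul, add_zero, Matrix.mul_one] at hfinal
  rw [h.gramian_zero, sub_zero, Matrix.zero_mul, sub_zero] at hinitial
  have hcov := (h.isNoiseProfile hN hN_psd).continuous_noiseCov_right (h.chart P)
  generalize L 1 * (-((b 1)⁻¹ * a 1) - P.1) = T at hT hinitial hstate hfinal
  simp only [hstate, inv_mul_mul_mul_transpose_inv]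
  rw [hfinal, covarianceMap, noiseCov, inv_eq_right_inv hinitial.symm,
    ← mul_mul_transpose_add_eq hT, mul_matrixIntegral_mul _ _ hcov]
  rfl

theorem exists_homeomorph_terminal_covariance (h : IsGramianFactorization a b P₀ X L)
    {N : ℝ → Matrix ι ι ℝ} (hN : Continuous N) (hN_psd : ∀ t, (N t).PosSemidef)
    {S₀ : Matrix ι ι ℝ} (hS₀ : S₀.PosDef) :
    ∃ e : {P : Matrix ι ι ℝ // Pᵀ = P ∧ (-((b 1)⁻¹ * a 1) - P).PosDef} ≃ₜ PosDefCone ι,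
      ∀ P, (e P).1 = (a 1 + b 1 * P.1) *
        (S₀ + matrixIntegral (volume : Measure unitInterval) fun s =>
          (a s + b s * P.1)⁻¹ * N s * ((a s + b s * P.1)⁻¹)ᵀ) * (a 1 + b 1 * P.1)ᵀ :=
  ⟨(h.chart.trans (IsHomeomorph.homeomorph _
      ((h.isNoiseProfile hN hN_psd).isHomeomorph_covarianceMap hS₀))).trans
      (PosDefCone.congr (h.isUnit 1 (Set.right_mem_Icc.2 zero_le_one))),
    fun P => (h.terminal_covariance_eq hN hN_psd S₀ P).symm⟩

end IsGramianFactorization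

end GramianFactorization

section Steering

open MeasureTheory

theorem matrixIntegral_unitInterval {ι : Type*} (f : ℝ → Matrix ι ι ℝ) :
    matrixIntegral (volume : Measure unitInterval) (fun s => f s) =
      Matrix.of fun i j => ∫ s in (0 : ℝ)..1, f s i j := by
  ext i j
  rw [of_apply, intervalIntegral.integral_of_le zero_le_one, ← integral_Icc_eq_integral_Ioc]
  exact integral_subtype measurableSet_Icc fun s => f s i j

open scoped Matrix.Norms.Operator in
theorem IsSTM.isHamiltonianFlow {ι κ : Type*} [Fintype ι] [DecidableEq ι] [Fintype κ]
    {A Q : ℝ → Matrix ι ι ℝ} {B : ℝ → Matrix ι κ ℝ} {Φ : ℝ → ℝ → Matrix (ι ⊕ ι) (ι ⊕ ι) ℝ}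
    (hΦ : IsSTM (fun t => fromBlocks (A t) (-(B t * (B t)ᵀ)) (-(Q t)) (-(A t)ᵀ)) Φ)
    (hQ : ∀ t, (Q t).PosSemidef) (s : ℝ) :
    IsHamiltonianFlow A (fun t => B t * (B t)ᵀ) Q fun t => Φ t s :=
  .of_mem_symplecticGroup (s := s) (fun t => posSemidef_self_mul_conjTranspose (B t)) hQ
    (fun t => hasDerivAt_matrix.2 (hΦ.2 s t)) (hΦ.1 s ▸ one_mem _)

end Steering

theorem stmt_11_general {n p q : ℕ}
    {A Q : ℝ → Matrix (Fin n) (Fin n) ℝ} {B : ℝ → Matrix (Fin n) (Fin p) ℝ}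
    {C : ℝ → Matrix (Fin n) (Fin q) ℝ} {D : ℝ → Matrix (Fin q) (Fin q) ℝ}
    (hC : Continuous C) (hD : Continuous D)
    (hQpsd : ∀ t, (Q t).PosSemidef) (hDpsd : ∀ t, (D t).PosSemidef)
    {Γ : ℕ → ℝ → Matrix (Fin n) (Fin p) ℝ} (hΓ : IsCtrbMatSeq A B Γ) (hTC : TotallyControllable Γ)
    {Φ : ℝ → ℝ → Matrix (Fin n ⊕ Fin n) (Fin n ⊕ Fin n) ℝ}
    (hΦ : IsSTM (fun t => fromBlocks (A t) (-(B t * (B t)ᵀ)) (-(Q t)) (-(A t)ᵀ)) Φ)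
    {Sig0 : Matrix (Fin n) (Fin n) ℝ} (hSig0 : Sig0.PosDef) :
    (∀ P : Matrix (Fin n) (Fin n) ℝ,
      Pᵀ = P → (-(((Φ 1 0).toBlocks₁₂)⁻¹ * (Φ 1 0).toBlocks₁₁) - P).PosDef →
      ∀ t ∈ Set.Icc (0 : ℝ) 1, IsUnit ((Φ t 0).toBlocks₁₁ + (Φ t 0).toBlocks₁₂ * P)) ∧
    ∃ h : {P : Matrix (Fin n) (Fin n) ℝ //
            Pᵀ = P ∧ (-(((Φ 1 0).toBlocks₁₂)⁻¹ * (Φ 1 0).toBlocks₁₁) - P).PosDef} ≃ₜ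
          {S : Matrix (Fin n) (Fin n) ℝ // S.PosDef},
      ∀ P, (h P : Matrix (Fin n) (Fin n) ℝ) = steerMap Φ C D Sig0 P := by
  obtain ⟨P₀, X, L, hfact⟩ := (hΦ.isHamiltonianFlow hQpsd 0).exists_isGramianFactorization
    (hΦ.1 0) fun s t hs hst ht => hTC.isControllableOn hΓ hs hst ht
  refine ⟨fun P hP hlt t ht => hfact.isUnit_add_mul ⟨P, hP, hlt⟩ ht, ?_⟩
  obtain ⟨e, he⟩ := hfact.exists_homeomorph_terminal_covariance
    (N := fun s => C s * D s * (C s)ᵀ) ((hC.matrix_mul hD).matrix_mul hC.matrix_transpose)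
    (fun s => posSemidef_mul_mul_transpose (hDpsd s) (C s)) hSig0
  refine ⟨e, fun P => ?_⟩
  rw [he, steerMap, ← matrixIntegral_unitInterval]

theorem stmt_11 {n p q : ℕ} (hn : 1 ≤ n) (hp : 1 ≤ p) (hq : 1 ≤ q)
    (A Q : ℝ → Matrix (Fin n) (Fin n) ℝ) (B : ℝ → Matrix (Fin n) (Fin p) ℝ)
    (C : ℝ → Matrix (Fin n) (Fin q) ℝ) (D : ℝ → Matrix (Fin q) (Fin q) ℝ)
    (hA : Continuous A) (hB : Continuous B) (hQ : Continuous Q)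
    (hC : Continuous C) (hD : Continuous D)
    (hQpsd : ∀ t, (Q t).PosSemidef) (hDpsd : ∀ t, (D t).PosSemidef)
    (hAsm : ∀ i j, ContDiff ℝ (n - 1 : ℕ) fun t => A t i j)
    (hBsm : ∀ i j, ContDiff ℝ (n : ℕ) fun t => B t i j)
    (Γ : ℕ → ℝ → Matrix (Fin n) (Fin p) ℝ)
    (hΓ : IsCtrbMatSeq A B Γ)
    (hTC : TotallyControllable Γ)
    (Φ : ℝ → ℝ → Matrix (Fin n ⊕ Fin n) (Fin n ⊕ Fin n) ℝ)
    (hΦ : IsSTM (fun t => fromBlocks (A t) (-(B t * (B t)ᵀ)) (-(Q t)) (-(A t)ᵀ)) Φ)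
    (Sig0 : Matrix (Fin n) (Fin n) ℝ) (hSig0 : Sig0.PosDef) :
    (∀ P : Matrix (Fin n) (Fin n) ℝ,
      Pᵀ = P → (-(((Φ 1 0).toBlocks₁₂)⁻¹ * (Φ 1 0).toBlocks₁₁) - P).PosDef →
      ∀ t ∈ Set.Icc (0:ℝ) 1, IsUnit ((Φ t 0).toBlocks₁₁ + (Φ t 0).toBlocks₁₂ * P)) ∧
    ∃ h : {P : Matrix (Fin n) (Fin n) ℝ //
            Pᵀ = P ∧ (-(((Φ 1 0).toBlocks₁₂)⁻¹ * (Φ 1 0).toBlocks₁₁) - P).PosDef} ≃ₜ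
          {S : Matrix (Fin n) (Fin n) ℝ // S.PosDef},
      ∀ P, (h P : Matrix (Fin n) (Fin n) ℝ) = steerMap Φ C D Sig0 (P : Matrix (Fin n) (Fin n) ℝ) :=
  stmt_11_general hC hD hQpsd hDpsd hΓ hTC hΦ hSig0
end

section
/- Let Σ and W be symmetric n×n matrices with Σ positive definite and W negative definite, and let P, V : [0,1] → ℝ^{n×n} be continuous with P(s) symmetric positive semidefinite and V(s) symmetric negative semidefinite for every s ∈ [0,1]. Then the n²×n² matrix S = Σ⊗W + W⊗Σ + ∫₀¹ (P(s)⊗V(s) + V(s)⊗P(s)) ds is symmetric and negative definite, where ⊗ denotes the Kronecker product. -/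
open Matrix Kronecker

/-!
Kronecker products of positive (semi)definite matrices are positive (semi)definite, so moving the
sign onto the negative factor exhibits `-S` as a positive definite matrix plus the integral of
positive semidefinite ones. The latter is positive semidefinite because its quadratic form at a
vector is the integral of the nonnegative quadratic forms of the integrand at that vector.
-/

section Kronecker

theorem continuousOn_kronecker {X R l m n p : Type*} [TopologicalSpace X] [TopologicalSpace R]
    [Mul R] [ContinuousMul R] {A : X → Matrix l m R} {B : X → Matrix n p R} {s : Set X}
    (hA : ContinuousOn A s) (hB : ContinuousOn B s) : ContinuousOn (fun x => A x ⊗ₖ B x) s :=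
  continuousOn_pi.2 fun i => continuousOn_pi.2 fun j =>
    ((continuous_id.matrix_elem i.1 j.1).comp_continuousOn hA).mul
      ((continuous_id.matrix_elem i.2 j.2).comp_continuousOn hB)

theorem neg_kronecker_add_kronecker_swap {R m : Type*} [NonUnitalNonAssocRing R]
    (A B : Matrix m m R) : -(A ⊗ₖ B + B ⊗ₖ A) = A ⊗ₖ (-B) + (-B) ⊗ₖ A := by
  ext i j
  simp only [Matrix.neg_apply, Matrix.add_apply, kroneckerMap_apply, neg_add, mul_neg, neg_mul]

variable {𝕜 m : Type*} [RCLike 𝕜] [Finite m] {A B : Matrix m m 𝕜}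

open scoped ComplexOrder

theorem posDef_neg_kronecker_add_kronecker_swap (hA : A.PosDef) (hB : (-B).PosDef) :
    (-(A ⊗ₖ B + B ⊗ₖ A)).PosDef := by
  rw [neg_kronecker_add_kronecker_swap]
  exact (hA.kronecker hB).add (hB.kronecker hA)

theorem posSemidef_neg_kronecker_add_kronecker_swap (hA : A.PosSemidef) (hB : (-B).PosSemidef) :
    (-(A ⊗ₖ B + B ⊗ₖ A)).PosSemidef := by
  rw [neg_kronecker_add_kronecker_swap]
  exact (hA.kronecker hB).add (hB.kronecker hA)

end Kronecker

section Integral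

open MeasureTheory
open scoped ComplexOrder

variable {𝕜 α m n : Type*} [RCLike 𝕜] [MeasurableSpace α] {μ : Measure α}

theorem isHermitian_integral {K : α → Matrix m m 𝕜} (hK : ∀ᵐ a ∂μ, (K a).IsHermitian) :
    (Matrix.of fun i j => ∫ a, K a i j ∂μ).IsHermitian := by
  refine IsHermitian.ext fun i j => ?_
  simp only [of_apply, RCLike.star_def, ← integral_conj]
  exact integral_congr_ae (hK.mono fun a ha => ha.apply i j)

theorem integral_finsupp_sum_star_mul_mul {K : α → Matrix m n 𝕜}
    (hK : ∀ i j, Integrable (fun a => K a i j) μ) (x : m →₀ 𝕜) (y : n →₀ 𝕜) :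
    ∫ a, (x.sum fun i xi => y.sum fun j yj => star xi * K a i j * yj) ∂μ =
      x.sum fun i xi => y.sum fun j yj => star xi * (∫ a, K a i j ∂μ) * yj := by
  have hterm : ∀ i j, Integrable (fun a => star (x i) * K a i j * y j) μ := fun i j =>
    ((hK i j).const_mul _).mul_const _
  simp only [Finsupp.sum]
  rw [integral_finsetSum _ fun i _ => integrable_finsetSum _ fun j _ => hterm i j]
  simp only [integral_finsetSum _ fun j _ => hterm _ j, integral_mul_const, integral_const_mul]

theorem posSemidef_integral {K : α → Matrix m m 𝕜}
    (hint : ∀ i j, Integrable (fun a => K a i j) μ) (hK : ∀ᵐ a ∂μ, (K a).PosSemidef) :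
    (Matrix.of fun i j => ∫ a, K a i j ∂μ).PosSemidef := by
  refine ⟨isHermitian_integral (hK.mono fun a ha => ha.isHermitian), fun x => ?_⟩
  simp only [of_apply, ← integral_finsupp_sum_star_mul_mul hint]
  exact integral_nonneg_of_ae (hK.mono fun a ha => ha.2 x)

theorem stmt_12_general [Finite m] {A B : Matrix m m 𝕜} (hA : A.PosDef) (hB : (-B).PosDef)
    {P V : α → Matrix m m 𝕜}
    (hint : ∀ i j, Integrable (fun a => (P a ⊗ₖ V a + V a ⊗ₖ P a) i j) μ)
    (hP : ∀ᵐ a ∂μ, (P a).PosSemidef) (hV : ∀ᵐ a ∂μ, (-(V a)).PosSemidef)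
    {S : Matrix (m × m) (m × m) 𝕜}
    (hS : S = A ⊗ₖ B + B ⊗ₖ A + Matrix.of fun i j => ∫ a, (P a ⊗ₖ V a + V a ⊗ₖ P a) i j ∂μ) :
    S.IsHermitian ∧ (-S).PosDef := by
  have hintegral : (Matrix.of fun i j => ∫ a, (-(P a ⊗ₖ V a + V a ⊗ₖ P a)) i j ∂μ).PosSemidef :=
    posSemidef_integral (fun i j => (hint i j).neg) <| by
      filter_upwards [hP, hV] with a hPa hVa
      exact posSemidef_neg_kronecker_add_kronecker_swap hPa hVa
  have hneg : -S = -(A ⊗ₖ B + B ⊗ₖ A) +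
      Matrix.of fun i j => ∫ a, (-(P a ⊗ₖ V a + V a ⊗ₖ P a)) i j ∂μ := by
    rw [hS, neg_add]
    congr 1
    ext i j
    simp only [Matrix.neg_apply, of_apply, integral_neg]
  have hpos : (-S).PosDef :=
    hneg ▸ (posDef_neg_kronecker_add_kronecker_swap hA hB).add_posSemidef hintegral
  exact ⟨isHermitian_neg_iff.1 hpos.isHermitian, hpos⟩

end Integral

theorem stmt_12 {n : ℕ} (hn : 1 ≤ n)
    (Sig W : Matrix (Fin n) (Fin n) ℝ)
    (hSig : Sig.PosDef) (hW : (-W).PosDef)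
    (P V : ℝ → Matrix (Fin n) (Fin n) ℝ)
    (hPc : ContinuousOn P (Set.Icc 0 1)) (hVc : ContinuousOn V (Set.Icc 0 1))
    (hP : ∀ s ∈ Set.Icc (0:ℝ) 1, (P s).PosSemidef)
    (hV : ∀ s ∈ Set.Icc (0:ℝ) 1, (-(V s)).PosSemidef)
    (S : Matrix (Fin n × Fin n) (Fin n × Fin n) ℝ)
    (hS : S = Sig ⊗ₖ W + W ⊗ₖ Sig +
      Matrix.of fun i j => ∫ s in (0:ℝ)..1, ((P s ⊗ₖ V s) + (V s ⊗ₖ P s)) i j) :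
    Sᵀ = S ∧ (-S).PosDef := by
  have hKc : ContinuousOn (fun s => P s ⊗ₖ V s + V s ⊗ₖ P s) (Set.Icc 0 1) :=
    (continuousOn_kronecker hPc hVc).add (continuousOn_kronecker hVc hPc)
  simp only [intervalIntegral.integral_of_le zero_le_one,
    ← MeasureTheory.integral_Icc_eq_integral_Ioc] at hS
  exact (stmt_12_general hSig hW
    (fun i j => ((continuous_id.matrix_elem i j).comp_continuousOn hKc).integrableOn_Icc)
    (MeasureTheory.ae_restrict_of_forall_mem measurableSet_Icc hP)
    (MeasureTheory.ae_restrict_of_forall_mem measurableSet_Icc hV) hS).imp_left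
      isHermitian_iff_isSymm.1
end
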